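/- Let (d;a) = (d_1,d_2,d_3; a_0,…,a_n) be an h-regular pair with exactly three degrees, where h is a positive integer, n ≥ 3, and a_i ∤ h for every i = 0,…,n. Then δ(d;a) ≥ F^h(a_0,…,a_n). -/

import Mathlib

/-!
The claim is reduced to multisets of degrees `D` and weights `A`, where `h`-regularity says that,
for every `g ∤ h`, at most as many weights as degrees are divisible by `g`, and to the statement
that every multiple of `h` above `∑ D - ∑ A` lies in the semigroup generated by `A`.

*Four weights, `h = 1`* (`R4.all`). Two semigroups whose multiples of `g₁`, `g₂` are full above
`f₁`, `f₂` glue to one whose multiples of `gcd (g₁, g₂)` are full above `f₁ + f₂ + lcm (g₁, g₂)`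
(`covers_glue`). Starting from single weights, four weights are glued in a chain or in two pairs,
and it remains to bound a sum of three lcms by `d₁ + d₂ + d₃`. If no three weights share a degree,
or if three of them do and the fourth divides another degree, this follows from divisibilities,
from `x + y ≤ lcm (x, y) + gcd (x, y)`, and from proper divisors being at most half
(`L211`, `L220`, `L310`). If all four weights divide only
`d₁`, suitable prime powers show that the three lcms are proper divisors of `d₁` with sum at most
`d₁` (`exact_four`).

*Five or more weights, `h = 1`* (`Ctx.false`). In a counterexample that is minimal for the number
of weights and then for their sum, two incomparable weights dividing `d₁` cannot be replaced by
their lcm, and a prime cannot be divided out. Hence for each degree at most one weight divides it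
and no other degree (`count_ex`), and weights with two common degrees are comparable (`cmp12`). A
smallest weight `v` dividing at least two degrees divides all weights if it divides all degrees. If
it divides `d₁` and `d₂` only, then, up to exchanging these two, any weight is a multiple of `v`, or
divides only `d₃`, or divides `d₂` and `d₃` only; if weights of the last kind not divisible by `v`
exist, the remaining weights are multiples of the smallest of them. By regularity a weight has at
most as many multiples among the weights as among the degrees, so there are at most four weights.

*Arbitrary `h`* (`bound`). Fewer than three degrees are allowed, which costs nothing for `h = 1`:
degrees and weights are padded by a common large number. For a prime `p ∣ h`, let `ψ` divide by `p`
the numbers divisible by `p`. If the weights prime to `p` have at least the sum of the degrees prime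
to `p`, then `ψ` reduces `h` to `h / p`. Otherwise, if among the multiples of `p` there are more
weights than degrees, only those are kept. If neither applies, either the pair is `h / p`-regular,
or the multiples of some `g ∣ h` are two weights and a single degree, and gluing these two weights
suffices (`glue_case`).
-/

open Finset

/-- The amplitude `δ` of the (sub)pair given by the degrees `d` indexed by `D`
and the weights `a` indexed by `A`. -/
def deltaOn {ι κ : Type*} (D : Finset ι) (d : ι → ℕ) (A : Finset κ) (a : κ → ℕ) : ℤ :=
  (∑ j ∈ D, (d j : ℤ)) - ∑ i ∈ A, (a i : ℤ)

/-- The amplitude of a full pair `(d;a)`. -/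
def deltaPair {ι κ : Type*} [Fintype ι] [Fintype κ] (d : ι → ℕ) (a : κ → ℕ) : ℤ :=
  deltaOn univ d univ a

/-- `h`-regularity of the (sub)pair given by the degrees `d` indexed by `D` and the
weights `a` indexed by `A`: for every nonempty subset `I ⊆ A` of the weight indices with
`a_I := gcd_{i ∈ I} a i > 1`, either there are `|I|` pairwise distinct degree indices
`p ∈ D` with `a_I ∣ d p`, or `a_I ∣ h`. -/
def IsHRegularOn {ι κ : Type*} (h : ℕ) (D : Finset ι) (d : ι → ℕ)
    (A : Finset κ) (a : κ → ℕ) : Prop :=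
  ∀ I : Finset κ, I ⊆ A → I.Nonempty → 1 < I.gcd a →
    (∃ P : Finset ι, P ⊆ D ∧ P.card = I.card ∧ ∀ j ∈ P, I.gcd a ∣ d j) ∨ I.gcd a ∣ h

/-- `h`-regularity of a full pair `(d;a)`. -/
def IsHRegularPair {ι κ : Type*} [Fintype ι] [Fintype κ] (h : ℕ) (d : ι → ℕ)
    (a : κ → ℕ) : Prop :=
  IsHRegularOn h univ d univ a

/-- The generalised `1/h`-Frobenius number `F^h` of the weights indexed by `A`.
Letting `g` be the gcd of the weights, this is the largest integer `z` divisible by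
`lcm g h` that is not a nonnegative integral combination of the weights; this agrees
with the renormalised definition `F^h = g * F^{h / gcd (g,h)} (a/g)`.  For `g = 1`
it is the largest multiple of `h` that is not a nonnegative integral combination of
the weights (so it equals `-h` if every positive multiple of `h` is such a combination),
and `frobOn 1 A a` is the ordinary Frobenius number `F` (so `F = -1` if some weight
equals `1`). -/
noncomputable def frobOn {κ : Type*} (h : ℕ) (A : Finset κ) (a : κ → ℕ) : ℤ :=
  sSup {z : ℤ | ((Nat.lcm (A.gcd a) h : ℕ) : ℤ) ∣ z ∧
    ¬ ∃ x : κ → ℕ, ((∑ i ∈ A, x i * a i : ℕ) : ℤ) = z}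

/-- The generalised `1/h`-Frobenius number `F^h` of a full tuple of weights. -/
noncomputable def frobNum {κ : Type*} [Fintype κ] (h : ℕ) (a : κ → ℕ) : ℤ :=
  frobOn h univ a

/-! ### Semigroups, gluing and regularity -/

/-- The numerical semigroup generated by the weights `A`, as a submonoid of `ℤ`. -/
def Sg (A : Multiset ℕ) : AddSubmonoid ℤ :=
  AddSubmonoid.closure {z | ∃ a ∈ A, (a : ℤ) = z}

/-- `h`-regularity of degrees `D` and weights `A`, both multisets: for every `g ∤ h`, at most as
many weights as degrees are divisible by `g`. -/
def Reg (h : ℕ) (D A : Multiset ℕ) : Prop :=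
  ∀ g : ℕ, ¬ g ∣ h → A.countP (g ∣ ·) ≤ D.countP (g ∣ ·)

/-- Every multiple of `g` exceeding `f` lies in `S`. -/
def Covers (S : AddSubmonoid ℤ) (g : ℕ) (f : ℤ) : Prop :=
  ∀ z : ℤ, (g : ℤ) ∣ z → f < z → z ∈ S

lemma mem_Sg {A : Multiset ℕ} {a : ℕ} (h : a ∈ A) : (a : ℤ) ∈ Sg A :=
  AddSubmonoid.subset_closure ⟨a, h, rfl⟩

lemma Sg_le {A : Multiset ℕ} {S : AddSubmonoid ℤ} (h : ∀ a ∈ A, (a : ℤ) ∈ S) : Sg A ≤ S := by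
  refine (AddSubmonoid.closure_le).2 ?_
  rintro _ ⟨a, ha, rfl⟩
  exact h a ha

lemma mul_mem_of {S : AddSubmonoid ℤ} {z : ℤ} (h : z ∈ S) (n : ℕ) : (n : ℤ) * z ∈ S := by
  simpa using S.nsmul_mem h n

lemma covers_base {S : AddSubmonoid ℤ} {a : ℕ} (ha : (a : ℤ) ∈ S) (h0 : 0 < a) :
    Covers S a (-(a : ℤ)) := by
  rintro _ ⟨k, rfl⟩ hk
  have hk' : 0 ≤ k := by
    have h0' : (0 : ℤ) < a := by exact_mod_cast h0
    by_contra hlt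
    nlinarith
  lift k to ℕ using hk'
  rw [mul_comm]
  exact mul_mem_of ha k

/-- Gluing: if `S` contains the multiples of `g₁` above `f₁` and the multiples of `g₂` above `f₂`,
then it contains the multiples of `gcd (g₁, g₂)` above `f₁ + f₂ + lcm (g₁, g₂)`. -/
lemma covers_glue {S : AddSubmonoid ℤ} {g₁ g₂ : ℕ} {f₁ f₂ : ℤ} (h₁ : Covers S g₁ f₁)
    (h₂ : Covers S g₂ f₂) (p₁ : 0 < g₁) (p₂ : 0 < g₂) :
    Covers S (Nat.gcd g₁ g₂) (f₁ + f₂ + Nat.lcm g₁ g₂) := by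
  rintro z ⟨k, hk⟩ hz
  have hL : (0 : ℤ) < ((Nat.lcm g₁ g₂ : ℕ) : ℤ) := by exact_mod_cast Nat.lcm_pos p₁ p₂
  have hb := Nat.gcd_eq_gcd_ab g₁ g₂
  set L : ℤ := ((Nat.lcm g₁ g₂ : ℕ) : ℤ) with hLdef
  have d₁ : (g₁ : ℤ) ∣ L := by rw [hLdef]; exact Int.natCast_dvd_natCast.2 (Nat.dvd_lcm_left g₁ g₂)
  have d₂ : (g₂ : ℤ) ∣ L := by rw [hLdef]; exact Int.natCast_dvd_natCast.2 (Nat.dvd_lcm_right g₁ g₂)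
  set u₀ : ℤ := g₁ * Nat.gcdA g₁ g₂ * k with hu₀
  set v₀ : ℤ := g₂ * Nat.gcdB g₁ g₂ * k with hv₀
  have hzuv : z = u₀ + v₀ := by rw [hk, hb]; ring
  -- translate the first summand into the window `(f₁, f₁ + L]`
  set u : ℤ := (u₀ - f₁ - 1) % L + f₁ + 1 with hu
  have hdiv := Int.emod_add_mul_ediv (u₀ - f₁ - 1) L
  have h0 := Int.emod_nonneg (u₀ - f₁ - 1) hL.ne'
  have h1 := Int.emod_lt_of_pos (u₀ - f₁ - 1) hL
  have huu : u = u₀ - L * ((u₀ - f₁ - 1) / L) := by rw [hu]; linarith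
  have hsum : z = u + (v₀ + L * ((u₀ - f₁ - 1) / L)) := by rw [huu, hzuv]; ring
  rw [hsum]
  refine S.add_mem (h₁ _ ?_ (by linarith)) (h₂ _ ?_ (by linarith))
  · rw [huu]
    exact dvd_sub (by rw [hu₀, mul_assoc]; exact dvd_mul_right _ _) (d₁.mul_right _)
  · exact dvd_add (by rw [hv₀, mul_assoc]; exact dvd_mul_right _ _) (d₂.mul_right _)

/-- Divisibility can be tested on prime powers. Together with `pp_lcm` and `Nat.dvd_gcd_iff`, this
turns divisibilities between expressions in gcd and lcm into propositional logic. -/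
lemma ppd {a b : ℕ} (h : ∀ p k : ℕ, p.Prime → p ^ k ∣ a → p ^ k ∣ b) : a ∣ b :=
  (Nat.dvd_iff_prime_pow_dvd_dvd b a).2 h

lemma pp_lcm {p k a b : ℕ} (hp : p.Prime) : p ^ k ∣ Nat.lcm a b ↔ p ^ k ∣ a ∨ p ^ k ∣ b := by
  rcases Nat.eq_zero_or_pos a with rfl | ha
  · simp
  rcases Nat.eq_zero_or_pos b with rfl | hb
  · simp
  rw [hp.pow_dvd_iff_le_factorization (Nat.lcm_pos ha hb).ne',
    hp.pow_dvd_iff_le_factorization ha.ne', hp.pow_dvd_iff_le_factorization hb.ne',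
    Nat.factorization_lcm ha.ne' hb.ne']
  simp

lemma pk {a b : ℕ} (h : a ∣ b) (q : ℕ) : q ∣ a → q ∣ b := fun h' => h'.trans h

/-- Replacing `x, y` by their lcm and gcd does not decrease the sum. It moves an lcm built from
several parts towards one degree, and leaves a gcd to be fitted into the next degree. -/
lemma bubble (x y : ℕ) (hx : 0 < x) (hy : 0 < y) : x + y ≤ Nat.lcm x y + Nat.gcd x y := by
  obtain ⟨a, ha⟩ := Nat.gcd_dvd_left x y
  obtain ⟨b, hb⟩ := Nat.gcd_dvd_right x y
  have hg : 0 < Nat.gcd x y := Nat.gcd_pos_of_pos_left _ hx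
  have hl := Nat.gcd_mul_lcm x y
  set g := Nat.gcd x y
  have hL : Nat.lcm x y = g * a * b := by
    apply Nat.eq_of_mul_eq_mul_left hg
    calc g * Nat.lcm x y = x * y := hl
      _ = (g * a) * (g * b) := by rw [← ha, ← hb]
      _ = g * (g * a * b) := by ring
  have ha0 : 0 < a := by rcases Nat.eq_zero_or_pos a with h | h; · simp [h] at ha; omega
                         · exact h
  have hb0 : 0 < b := by rcases Nat.eq_zero_or_pos b with h | h; · simp [h] at hb; omega
                         · exact h
  rw [hL, ha, hb]
  obtain ⟨a', rfl⟩ : ∃ a', a = a' + 1 := ⟨a - 1, by omega⟩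
  obtain ⟨b', rfl⟩ : ∃ b', b = b' + 1 := ⟨b - 1, by omega⟩
  have : 0 ≤ g * a' * b' := Nat.zero_le _
  nlinarith

lemma add_le_lcm {x y : ℕ} (hx : 0 < x) (hy : 0 < y) (h1 : ¬ x ∣ y) (h2 : ¬ y ∣ x) :
    x + y ≤ Nat.lcm x y := by
  have hl := Nat.lcm_pos hx hy
  obtain ⟨a, ha⟩ := Nat.dvd_lcm_left x y
  obtain ⟨b, hb⟩ := Nat.dvd_lcm_right x y
  have ha2 : 2 ≤ a := by
    rcases Nat.lt_or_ge a 2 with h | h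
    · interval_cases a
      · omega
      · exact absurd (by rw [mul_one] at ha; exact ha ▸ Nat.dvd_lcm_right x y) h2
    · exact h
  have hb2 : 2 ≤ b := by
    rcases Nat.lt_or_ge b 2 with h | h
    · interval_cases b
      · omega
      · exact absurd (by rw [mul_one] at hb; exact hb ▸ Nat.dvd_lcm_left x y) h1
    · exact h
  nlinarith

section facts
variable {x y z t d₁ d₂ d₃ : ℕ} {B : Multiset ℕ}

lemma reg_one (h : Reg 1 {d₁, d₂, d₃} (x ::ₘ B)) : x ∣ d₁ ∨ x ∣ d₂ ∨ x ∣ d₃ := by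
  by_cases h1 : x ∣ 1
  · left; exact h1.trans (one_dvd _)
  have := h _ h1
  simp only [Multiset.insert_eq_cons, Multiset.countP_cons, ← Multiset.cons_zero, Multiset.countP_zero, dvd_refl, if_true] at this
  by_contra hc
  push Not at hc
  simp [hc.1, hc.2.1, hc.2.2] at this

/-- The gcd of two weights divides two of the three degrees. -/
lemma reg_two (h : Reg 1 {d₁, d₂, d₃} (x ::ₘ y ::ₘ B)) :
    (Nat.gcd x y ∣ d₁ ∧ Nat.gcd x y ∣ d₂) ∨ (Nat.gcd x y ∣ d₁ ∧ Nat.gcd x y ∣ d₃) ∨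
      (Nat.gcd x y ∣ d₂ ∧ Nat.gcd x y ∣ d₃) := by
  by_cases h1 : Nat.gcd x y ∣ 1
  · left; exact ⟨h1.trans (one_dvd _), h1.trans (one_dvd _)⟩
  have := h _ h1
  have e1 := Nat.gcd_dvd_left x y
  have e2 := Nat.gcd_dvd_right x y
  simp only [Multiset.insert_eq_cons, Multiset.countP_cons, ← Multiset.cons_zero, Multiset.countP_zero, e1, e2, if_true] at this
  split_ifs at this <;> tauto

/-- A common divisor of three weights divides all three degrees. -/
lemma reg_three {g : ℕ} (h : Reg 1 {d₁, d₂, d₃} (x ::ₘ y ::ₘ z ::ₘ B)) (hx : g ∣ x) (hy : g ∣ y)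
    (hz : g ∣ z) : g ∣ d₁ ∧ g ∣ d₂ ∧ g ∣ d₃ := by
  by_cases h1 : g ∣ 1
  · exact ⟨h1.trans (one_dvd _), h1.trans (one_dvd _), h1.trans (one_dvd _)⟩
  have := h _ h1
  simp only [Multiset.insert_eq_cons, Multiset.countP_cons, ← Multiset.cons_zero, Multiset.countP_zero, hx, hy, hz, if_true] at this
  split_ifs at this <;> omega

/-- Four weights have no common divisor but `1`, as there are only three degrees. -/
lemma reg_four {g : ℕ} (h : Reg 1 {d₁, d₂, d₃} (x ::ₘ y ::ₘ z ::ₘ t ::ₘ B)) (hx : g ∣ x)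
    (hy : g ∣ y) (hz : g ∣ z) (ht : g ∣ t) : g = 1 := by
  by_contra h1
  have := h _ (mt Nat.dvd_one.1 h1)
  simp only [Multiset.insert_eq_cons, Multiset.countP_cons, ← Multiset.cons_zero, Multiset.countP_zero, hx, hy, hz, ht, if_true] at this
  split_ifs at this <;> omega

end facts

/-! ### Four weights: gluing, and degrees shared by at most two weights -/

/-- `Good x y z t N`: every integer exceeding `N - x - y - z - t` lies in the semigroup generated
by `x, y, z, t`. -/
def Good (x y z t : ℕ) (N : ℕ) : Prop :=
  ∀ w : ℤ, (N : ℤ) - (x + y + z + t) < w → w ∈ Sg {x, y, z, t}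

lemma Good.mono {x y z t N M : ℕ} (h : Good x y z t N) (hM : N ≤ M) : Good x y z t M :=
  fun w hw => h w (by have : (N : ℤ) ≤ M := by exact_mod_cast hM
                      linarith)

lemma Sg_congr {A B : Multiset ℕ} (h : ∀ a, a ∈ A ↔ a ∈ B) : Sg A = Sg B := by
  unfold Sg; simp only [h]

lemma Good.s12 {x y z t N : ℕ} (h : Good x y z t N) : Good y x z t N := fun w hw => by
  rw [Sg_congr (B := {x, y, z, t}) (by intro a; simp; tauto)]
  exact h w (by linarith)

lemma Good.s23 {x y z t N : ℕ} (h : Good x y z t N) : Good x z y t N := fun w hw => by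
  rw [Sg_congr (B := {x, y, z, t}) (by intro a; simp; tauto)]
  exact h w (by linarith)

lemma Good.s34 {x y z t N : ℕ} (h : Good x y z t N) : Good x y t z N := fun w hw => by
  rw [Sg_congr (B := {x, y, z, t}) (by intro a; simp; tauto)]
  exact h w (by linarith)

/-- Chain gluing: `x` with `y`, then the result with `z`, then with `t`. -/
lemma good_chain {x y z t N : ℕ} (hx : 0 < x) (hy : 0 < y) (hz : 0 < z) (ht : 0 < t)
    (h1 : Nat.gcd (Nat.gcd (Nat.gcd x y) z) t = 1)
    (hN : Nat.lcm x y + Nat.lcm (Nat.gcd x y) z + Nat.lcm (Nat.gcd (Nat.gcd x y) z) t ≤ N) :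
    Good x y z t N := by
  have bx := covers_base (S := Sg {x, y, z, t}) (a := x) (mem_Sg (by simp)) hx
  have bY := covers_base (S := Sg {x, y, z, t}) (a := y) (mem_Sg (by simp)) hy
  have bz := covers_base (S := Sg {x, y, z, t}) (a := z) (mem_Sg (by simp)) hz
  have bt := covers_base (S := Sg {x, y, z, t}) (a := t) (mem_Sg (by simp)) ht
  have g1 := covers_glue bx bY hx hy
  have g2 := covers_glue g1 bz (Nat.gcd_pos_of_pos_left _ hx) hz
  have g3 := covers_glue g2 bt (Nat.gcd_pos_of_pos_right _ hz) ht
  intro w hw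
  have hN' : ((Nat.lcm x y + Nat.lcm (Nat.gcd x y) z + Nat.lcm (Nat.gcd (Nat.gcd x y) z) t : ℕ) : ℤ)
    ≤ N := by exact_mod_cast hN
  push_cast at hN'
  exact g3 w (by rw [h1]; simp) (by linarith)

/-- Balanced gluing: `x` with `y`, and `z` with `t`, then the two results. -/
lemma good_balanced {x y z t N : ℕ} (hx : 0 < x) (hy : 0 < y) (hz : 0 < z) (ht : 0 < t)
    (h1 : Nat.gcd (Nat.gcd x y) (Nat.gcd z t) = 1)
    (hN : Nat.lcm x y + Nat.lcm z t + Nat.lcm (Nat.gcd x y) (Nat.gcd z t) ≤ N) :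
    Good x y z t N := by
  have bx := covers_base (S := Sg {x, y, z, t}) (a := x) (mem_Sg (by simp)) hx
  have bY := covers_base (S := Sg {x, y, z, t}) (a := y) (mem_Sg (by simp)) hy
  have bz := covers_base (S := Sg {x, y, z, t}) (a := z) (mem_Sg (by simp)) hz
  have bt := covers_base (S := Sg {x, y, z, t}) (a := t) (mem_Sg (by simp)) ht
  have g1 := covers_glue bx bY hx hy
  have g2 := covers_glue bz bt hz ht
  have g3 := covers_glue g1 g2 (Nat.gcd_pos_of_pos_left _ hx) (Nat.gcd_pos_of_pos_left _ hz)
  intro w hw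
  have hN' : ((Nat.lcm x y + Nat.lcm z t + Nat.lcm (Nat.gcd x y) (Nat.gcd z t) : ℕ) : ℤ)
    ≤ N := by exact_mod_cast hN
  push_cast at hN'
  exact g3 w (by rw [h1]; simp) (by linarith)

/-- Four positive weights and three positive degrees forming a `1`-regular pair. -/
structure R4 (x y z t d₁ d₂ d₃ : ℕ) : Prop where
  px : 0 < x
  py : 0 < y
  pz : 0 < z
  pt : 0 < t
  p1 : 0 < d₁
  p2 : 0 < d₂
  p3 : 0 < d₃
  reg : Reg 1 {d₁, d₂, d₃} {x, y, z, t}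

namespace R4
variable {x y z t d₁ d₂ d₃ : ℕ}

lemma s12 (h : R4 x y z t d₁ d₂ d₃) : R4 y x z t d₁ d₂ d₃ :=
  ⟨h.py, h.px, h.pz, h.pt, h.p1, h.p2, h.p3, by
    have := h.reg; simp only [Multiset.insert_eq_cons] at this ⊢
    rwa [Multiset.cons_swap y x]⟩

lemma s23 (h : R4 x y z t d₁ d₂ d₃) : R4 x z y t d₁ d₂ d₃ :=
  ⟨h.px, h.pz, h.py, h.pt, h.p1, h.p2, h.p3, by
    have := h.reg; simp only [Multiset.insert_eq_cons] at this ⊢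
    rwa [Multiset.cons_swap z y]⟩

lemma s34 (h : R4 x y z t d₁ d₂ d₃) : R4 x y t z d₁ d₂ d₃ :=
  ⟨h.px, h.py, h.pt, h.pz, h.p1, h.p2, h.p3, by
    have := h.reg; simp only [Multiset.insert_eq_cons, ← Multiset.cons_zero] at this ⊢
    rwa [Multiset.cons_swap t z]⟩

lemma d12 (h : R4 x y z t d₁ d₂ d₃) : R4 x y z t d₂ d₁ d₃ :=
  ⟨h.px, h.py, h.pz, h.pt, h.p2, h.p1, h.p3, by
    have := h.reg; simp only [Multiset.insert_eq_cons] at this ⊢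
    rwa [Multiset.cons_swap d₂ d₁]⟩

lemma d23 (h : R4 x y z t d₁ d₂ d₃) : R4 x y z t d₁ d₃ d₂ :=
  ⟨h.px, h.py, h.pz, h.pt, h.p1, h.p3, h.p2, by
    have := h.reg; simp only [Multiset.insert_eq_cons, ← Multiset.cons_zero] at this ⊢
    rwa [Multiset.cons_swap d₃ d₂]⟩

lemma s14 (h : R4 x y z t d₁ d₂ d₃) : R4 t y z x d₁ d₂ d₃ := h.s34.s23.s12.s23.s34
lemma s24 (h : R4 x y z t d₁ d₂ d₃) : R4 x t z y d₁ d₂ d₃ := h.s34.s23.s34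
lemma s13 (h : R4 x y z t d₁ d₂ d₃) : R4 z y x t d₁ d₂ d₃ := h.s12.s23.s12
lemma d13 (h : R4 x y z t d₁ d₂ d₃) : R4 x y z t d₃ d₂ d₁ := h.d12.d23.d12

lemma one (h : R4 x y z t d₁ d₂ d₃) : x ∣ d₁ ∨ x ∣ d₂ ∨ x ∣ d₃ :=
  reg_one (B := {y, z, t}) h.reg

lemma two (h : R4 x y z t d₁ d₂ d₃) : (Nat.gcd x y ∣ d₁ ∧ Nat.gcd x y ∣ d₂) ∨
    (Nat.gcd x y ∣ d₁ ∧ Nat.gcd x y ∣ d₃) ∨ (Nat.gcd x y ∣ d₂ ∧ Nat.gcd x y ∣ d₃) :=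
  reg_two (B := {z, t}) h.reg

lemma three (h : R4 x y z t d₁ d₂ d₃) (g : ℕ) (hx : g ∣ x) (hy : g ∣ y) (hz : g ∣ z) :
    g ∣ d₁ ∧ g ∣ d₂ ∧ g ∣ d₃ :=
  reg_three (B := {t}) h.reg hx hy hz

lemma four (h : R4 x y z t d₁ d₂ d₃) (g : ℕ) (hx : g ∣ x) (hy : g ∣ y) (hz : g ∣ z) (ht : g ∣ t) :
    g = 1 :=
  reg_four (B := 0) h.reg hx hy hz ht

/-- Chain gluing; regularity makes the four weights coprime. -/
lemma chain (h : R4 x y z t d₁ d₂ d₃) {N : ℕ}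
    (hN : Nat.lcm x y + Nat.lcm (Nat.gcd x y) z + Nat.lcm (Nat.gcd (Nat.gcd x y) z) t ≤ N) :
    Good x y z t N := by
  refine good_chain h.px h.py h.pz h.pt (h.four _ ?_ ?_ ?_ ?_) hN <;>
    grind [Nat.dvd_gcd_iff, Nat.dvd_trans, Nat.gcd_dvd_left, Nat.gcd_dvd_right]

/-- Balanced gluing; regularity makes the four weights coprime. -/
lemma balanced (h : R4 x y z t d₁ d₂ d₃) {N : ℕ}
    (hN : Nat.lcm x y + Nat.lcm z t + Nat.lcm (Nat.gcd x y) (Nat.gcd z t) ≤ N) :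
    Good x y z t N := by
  refine good_balanced h.px h.py h.pz h.pt (h.four _ ?_ ?_ ?_ ?_) hN <;>
    grind [Nat.dvd_gcd_iff, Nat.dvd_trans, Nat.gcd_dvd_left, Nat.gcd_dvd_right]

lemma t123 (h : R4 x y z t d₁ d₂ d₃) : Nat.gcd (Nat.gcd x y) z ∣ d₁ ∧
    Nat.gcd (Nat.gcd x y) z ∣ d₂ ∧ Nat.gcd (Nat.gcd x y) z ∣ d₃ :=
  h.three _ ((Nat.gcd_dvd_left _ _).trans (Nat.gcd_dvd_left _ _))
    ((Nat.gcd_dvd_left _ _).trans (Nat.gcd_dvd_right _ _)) (Nat.gcd_dvd_right _ _)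

/-- Weights `x, y ∣ d₁`, `z ∣ d₂`, `t ∣ d₃`. -/
lemma L211 (h : R4 x y z t d₁ d₂ d₃) (hx : x ∣ d₁) (hy : y ∣ d₁) (hz : z ∣ d₂) (ht : t ∣ d₃) :
    Good x y z t (d₁ + d₂ + d₃) := by
  have key : ∀ {z t d₂ d₃ : ℕ}, R4 x y z t d₁ d₂ d₃ → z ∣ d₂ → t ∣ d₃ → Nat.gcd x y ∣ d₂ →
      Good x y z t (d₁ + d₂ + d₃) := by
    intro z t d₂ d₃ h hz ht hg
    exact h.chain (by
      have := Nat.le_of_dvd h.p1 (Nat.lcm_dvd hx hy)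
      have := Nat.le_of_dvd h.p2 (Nat.lcm_dvd hg hz)
      have := Nat.le_of_dvd h.p3 (Nat.lcm_dvd h.t123.2.2 ht)
      omega)
  rcases h.two with h2 | h2 | h2
  · exact key h hz ht h2.2
  · rw [add_right_comm]; exact (key h.s34.d23 ht hz h2.2).s34
  · exact key h hz ht h2.1

/-- Weights `x, y ∣ d₁` and `z, t ∣ d₂`. -/
lemma L220 (h : R4 x y z t d₁ d₂ d₃) (hx : x ∣ d₁) (hy : y ∣ d₁) (hz : z ∣ d₂) (ht : t ∣ d₂) :
    Good x y z t (d₁ + d₂ + d₃) := by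
  have key : ∀ {x y z t d₁ d₂ : ℕ}, R4 x y z t d₁ d₂ d₃ → x ∣ d₁ → y ∣ d₁ → z ∣ d₂ → t ∣ d₂ →
      Nat.gcd x y ∣ d₂ → Nat.gcd z t ∣ d₃ → Good x y z t (d₁ + d₂ + d₃) := by
    intro x y z t d₁ d₂ h hx hy hz ht hg hg'
    have t3 := h.t123
    refine h.chain ?_
    have e1 := Nat.le_of_dvd h.p1 (Nat.lcm_dvd hx hy)
    have pG := Nat.gcd_pos_of_pos_left y h.px
    have e2 := bubble (Nat.lcm (Nat.gcd x y) z) (Nat.lcm (Nat.gcd (Nat.gcd x y) z) t)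
      (Nat.lcm_pos pG h.pz) (Nat.lcm_pos (Nat.gcd_pos_of_pos_left _ pG) h.pt)
    have e3 : Nat.lcm (Nat.lcm (Nat.gcd x y) z) (Nat.lcm (Nat.gcd (Nat.gcd x y) z) t) ∣ d₂ :=
      Nat.lcm_dvd (Nat.lcm_dvd hg hz) (Nat.lcm_dvd t3.2.1 ht)
    have e4 : Nat.gcd (Nat.lcm (Nat.gcd x y) z) (Nat.lcm (Nat.gcd (Nat.gcd x y) z) t) ∣ d₃ := by
      refine ppd fun p k hp => ?_
      have a1 := h.s34.three (p ^ k)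
      have a2 := h.three (p ^ k)
      have a3 := pk hg' (p ^ k)
      simp only [pp_lcm hp, Nat.dvd_gcd_iff] at a3 ⊢
      tauto
    have := Nat.le_of_dvd h.p2 e3
    have := Nat.le_of_dvd h.p3 e4
    omega
  have hz2 := h.s23.s12.s34.s23.two
  -- split according to which of the gcds of `x, y` and of `z, t` divide the third degree
  by_cases c1 : Nat.gcd x y ∣ d₃ <;> by_cases c2 : Nat.gcd z t ∣ d₃
  · exact h.balanced (by
      have := Nat.le_of_dvd h.p1 (Nat.lcm_dvd hx hy)
      have := Nat.le_of_dvd h.p2 (Nat.lcm_dvd hz ht)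
      have := Nat.le_of_dvd h.p3 (Nat.lcm_dvd c1 c2)
      omega)
  · have := key h.s23.s12.s34.s23.d12 hz ht hx hy (by tauto) c1
    rw [add_comm d₁ d₂]
    exact this.s23.s12.s34.s23
  · exact key h hx hy hz ht (by have := h.two; tauto) c2
  · have hG := h.two
    have G1 : Nat.gcd x y ∣ d₁ ∧ Nat.gcd x y ∣ d₂ := by tauto
    have H1 : Nat.gcd z t ∣ d₁ ∧ Nat.gcd z t ∣ d₂ := by tauto
    refine h.balanced ?_
    have pA : 0 < Nat.lcm x y := Nat.lcm_pos h.px h.py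
    have pB : 0 < Nat.lcm z t := Nat.lcm_pos h.pz h.pt
    have pG := Nat.gcd_pos_of_pos_left y h.px
    have pH := Nat.gcd_pos_of_pos_left t h.pz
    have a3 := fun g => h.three g
    have a4 := fun g => h.s34.three g
    have a1 := fun g => h.s14.three g
    have a2 := fun g => h.s24.three g
    have dA : Nat.lcm x y ∣ d₁ := Nat.lcm_dvd hx hy
    have dB : Nat.lcm z t ∣ d₂ := Nat.lcm_dvd hz ht
    set G := Nat.gcd x y with hGd
    set H := Nat.gcd z t with hHd
    set A := Nat.lcm x y with hAd
    set B := Nat.lcm z t with hBd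
    set K := Nat.lcm G (Nat.gcd A H) with hK
    have pK : 0 < K := Nat.lcm_pos pG (Nat.gcd_pos_of_pos_left _ pA)
    have b1 := bubble A (Nat.lcm G H) pA (Nat.lcm_pos pG pH)
    have b2 := bubble B K pB pK
    have e1 : Nat.lcm A (Nat.lcm G H) ∣ d₁ := Nat.lcm_dvd dA (Nat.lcm_dvd G1.1 H1.1)
    have e2 : Nat.gcd A (Nat.lcm G H) ∣ K := by
      refine ppd fun p k hp => ?_
      grind [pp_lcm, Nat.dvd_gcd_iff]
    have e3 : Nat.lcm B K ∣ d₂ := by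
      refine ppd fun p k hp => ?_
      grind [pp_lcm, Nat.dvd_gcd_iff, Nat.dvd_trans]
    have e4 : Nat.gcd B K ∣ d₃ := by
      refine ppd fun p k hp => ?_
      have := a1 (p ^ k)
      have := a2 (p ^ k)
      have := a3 (p ^ k)
      have := a4 (p ^ k)
      grind [pp_lcm, Nat.dvd_gcd_iff, Nat.dvd_trans]
    have := Nat.le_of_dvd h.p1 e1
    have := Nat.le_of_dvd pK e2
    have := Nat.le_of_dvd h.p2 e3
    have := Nat.le_of_dvd h.p3 e4
    omega

end R4

/-! ### Four weights: three weights share a degree -/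

namespace R4
variable {x y z t d₁ d₂ d₃ : ℕ}

/-- Weights `x, y, z ∣ d₁` and `t ∣ d₂`, all three pairwise gcds of `x, y, z` dividing `d₂`. -/
lemma L310_22 (h : R4 x y z t d₁ d₂ d₃) (hx : x ∣ d₁) (hy : y ∣ d₁) (hz : z ∣ d₁) (ht : t ∣ d₂)
    (hxy : Nat.gcd x y ∣ d₂) (hxz : Nat.gcd x z ∣ d₂) (hyz : Nat.gcd y z ∣ d₂) :
    Good x y z t (d₁ + d₂ + d₃) := by
  refine (h.s34.chain (N := d₁ + d₂ + d₃) ?_).s34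
  have pw : 0 < Nat.lcm x y := Nat.lcm_pos h.px h.py
  have pG := Nat.gcd_pos_of_pos_left y h.px
  have pu : 0 < Nat.lcm (Nat.gcd (Nat.gcd x y) t) z :=
    Nat.lcm_pos (Nat.gcd_pos_of_pos_left _ pG) h.pz
  have pv : 0 < Nat.lcm (Nat.gcd x y) t := Nat.lcm_pos pG h.pt
  have b1 := bubble _ _ pw pu
  have b2 := bubble _ _ (Nat.gcd_pos_of_pos_left (Nat.lcm (Nat.gcd (Nat.gcd x y) t) z) pw) pv
  have e1 : Nat.lcm (Nat.lcm x y) (Nat.lcm (Nat.gcd (Nat.gcd x y) t) z) ∣ d₁ :=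
    Nat.lcm_dvd (Nat.lcm_dvd hx hy) (Nat.lcm_dvd h.s34.t123.1 hz)
  have e2 : Nat.lcm (Nat.gcd (Nat.lcm x y) (Nat.lcm (Nat.gcd (Nat.gcd x y) t) z))
      (Nat.lcm (Nat.gcd x y) t) ∣ d₂ := by
    refine ppd fun p k hp => ?_
    have a1 := pk ht (p ^ k)
    have a2 := pk hxy (p ^ k)
    have a3 := pk hxz (p ^ k)
    have a4 := pk hyz (p ^ k)
    simp only [pp_lcm hp, Nat.dvd_gcd_iff] at a1 a2 a3 a4 ⊢
    tauto
  have e3 : Nat.gcd (Nat.gcd (Nat.lcm x y) (Nat.lcm (Nat.gcd (Nat.gcd x y) t) z))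
      (Nat.lcm (Nat.gcd x y) t) ∣ d₃ := by
    refine ppd fun p k hp => ?_
    have a1 := h.three (p ^ k)
    have a2 := h.s34.three (p ^ k)
    have a3 := h.s14.three (p ^ k)
    have a4 := h.s24.three (p ^ k)
    simp only [pp_lcm hp, Nat.dvd_gcd_iff]
    tauto
  have := Nat.le_of_dvd h.p1 e1
  have := Nat.le_of_dvd h.p2 e2
  have := Nat.le_of_dvd h.p3 e3
  omega

/-- Weights `x, y, z ∣ d₁` and `t ∣ d₂`, with `gcd (x, y) ∣ d₂` and the gcds with `z` dividing
`d₃`. -/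
lemma L310_32 (h : R4 x y z t d₁ d₂ d₃) (hx : x ∣ d₁) (hy : y ∣ d₁) (hz : z ∣ d₁) (ht : t ∣ d₂)
    (hxy : Nat.gcd x y ∣ d₂) (hxz : Nat.gcd x z ∣ d₃) (hyz : Nat.gcd y z ∣ d₃) :
    Good x y z t (d₁ + d₂ + d₃) := by
  refine (h.s34.chain (N := d₁ + d₂ + d₃) ?_).s34
  have pw : 0 < Nat.lcm x y := Nat.lcm_pos h.px h.py
  have pG := Nat.gcd_pos_of_pos_left y h.px
  have pu : 0 < Nat.lcm (Nat.gcd (Nat.gcd x y) t) z :=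
    Nat.lcm_pos (Nat.gcd_pos_of_pos_left _ pG) h.pz
  have b1 := bubble _ _ pw pu
  have e1 : Nat.lcm (Nat.lcm x y) (Nat.lcm (Nat.gcd (Nat.gcd x y) t) z) ∣ d₁ :=
    Nat.lcm_dvd (Nat.lcm_dvd hx hy) (Nat.lcm_dvd h.s34.t123.1 hz)
  have e2 : Nat.lcm (Nat.gcd x y) t ∣ d₂ := Nat.lcm_dvd hxy ht
  have e3 : Nat.gcd (Nat.lcm x y) (Nat.lcm (Nat.gcd (Nat.gcd x y) t) z) ∣ d₃ := by
    refine ppd fun p k hp => ?_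
    have a2 := h.s34.three (p ^ k)
    have a3 := pk hxz (p ^ k)
    have a4 := pk hyz (p ^ k)
    simp only [pp_lcm hp, Nat.dvd_gcd_iff] at a3 a4 ⊢
    tauto
  have := Nat.le_of_dvd h.p1 e1
  have := Nat.le_of_dvd h.p2 e2
  have := Nat.le_of_dvd h.p3 e3
  omega

/-- Weights `x, y, z ∣ d₁` and `t ∣ d₂`, all three pairwise gcds of `x, y, z` dividing `d₃`. -/
lemma L310_33 (h : R4 x y z t d₁ d₂ d₃) (hx : x ∣ d₁) (hy : y ∣ d₁) (hz : z ∣ d₁) (ht : t ∣ d₂)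
    (hxy : Nat.gcd x y ∣ d₃) (hxz : Nat.gcd x z ∣ d₃) (hyz : Nat.gcd y z ∣ d₃) :
    Good x y z t (d₁ + d₂ + d₃) := by
  refine h.chain ?_
  have pw : 0 < Nat.lcm x y := Nat.lcm_pos h.px h.py
  have pG := Nat.gcd_pos_of_pos_left y h.px
  have b1 := bubble _ _ pw (Nat.lcm_pos pG h.pz)
  have e1 : Nat.lcm (Nat.lcm x y) (Nat.lcm (Nat.gcd x y) z) ∣ d₁ :=
    Nat.lcm_dvd (Nat.lcm_dvd hx hy) (Nat.lcm_dvd ((Nat.gcd_dvd_left _ _).trans hx) hz)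
  have e2 : Nat.lcm (Nat.gcd (Nat.gcd x y) z) t ∣ d₂ := Nat.lcm_dvd h.t123.2.1 ht
  have e3 : Nat.gcd (Nat.lcm x y) (Nat.lcm (Nat.gcd x y) z) ∣ d₃ := by
    refine ppd fun p k hp => ?_
    have a2 := pk hxy (p ^ k)
    have a3 := pk hxz (p ^ k)
    have a4 := pk hyz (p ^ k)
    simp only [pp_lcm hp, Nat.dvd_gcd_iff] at a2 a3 a4 ⊢
    tauto
  have := Nat.le_of_dvd h.p1 e1
  have := Nat.le_of_dvd h.p2 e2
  have := Nat.le_of_dvd h.p3 e3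
  omega
end R4

lemma two_mul_le_of_dvd_ne {m n : ℕ} (h : m ∣ n) (hn : 0 < n) (hne : m ≠ n) : 2 * m ≤ n := by
  obtain ⟨k, rfl⟩ := h
  rcases k with _ | _ | k
  · omega
  · simp at hne
  · nlinarith [Nat.zero_le (m * k)]

/-- A failing divisibility is witnessed by a prime power. -/
lemma exists_pp {a b : ℕ} (h : ¬ a ∣ b) : ∃ p k : ℕ, p.Prime ∧ p ^ k ∣ a ∧ ¬ p ^ k ∣ b := by
  by_contra hc
  push Not at hc
  exact h (ppd hc)

namespace R4
variable {x y z t d₁ d₂ d₃ : ℕ}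

set_option maxHeartbeats 800000 in
/-- The case of `L310_23` in which `lcm (gcd (x, y), z)`, `lcm (x, z)` and `lcm (y, z)` all equal
`d₁`. The chain or the balanced gluing stays below the bound, according to which of the cofactors
`γ = gcd (x, y) / gcd (x, y, z)` and `τ = t / gcd (Y, t)` is larger. -/
lemma L310_23_eq (h : R4 x y z t d₁ d₂ d₃) (ht : t ∣ d₂)
    (hxy : Nat.gcd x y ∣ d₃) (hxz : Nat.gcd x z ∣ d₂) (hyz : Nat.gcd y z ∣ d₂)
    (c1 : Nat.lcm (Nat.gcd x y) z = d₁) (c2 : Nat.lcm x z = d₁) (c3 : Nat.lcm y z = d₁) :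
    Good x y z t (d₁ + d₂ + d₃) := by
  obtain ⟨Y, hY⟩ : ∃ Y, Y = Nat.lcm (Nat.gcd x z) (Nat.gcd y z) := ⟨_, rfl⟩
  obtain ⟨T, hT⟩ : ∃ T, T = Nat.lcm (Nat.gcd (Nat.gcd x y) z) t := ⟨_, rfl⟩
  obtain ⟨σ, hσ⟩ : ∃ σ, σ = Nat.gcd Y T := ⟨_, rfl⟩
  have chain := h.chain (N := d₁ + d₂ + d₃)
  have bal := h.balanced (N := d₁ + d₂ + d₃)
  have pG := Nat.gcd_pos_of_pos_left y h.px
  have pΛ := Nat.gcd_pos_of_pos_left z pG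
  have pY : 0 < Y := hY ▸ Nat.lcm_pos (Nat.gcd_pos_of_pos_left z h.px) (Nat.gcd_pos_of_pos_left z h.py)
  have pσ : 0 < σ := hσ ▸ Nat.gcd_pos_of_pos_left _ pY
  have hY2 : Y ∣ d₂ := hY ▸ Nat.lcm_dvd hxz hyz
  have hYz : Y ∣ z := hY ▸ Nat.lcm_dvd (Nat.gcd_dvd_right _ _) (Nat.gcd_dvd_right _ _)
  have w_le : Nat.lcm x y ∣ Nat.lcm (Nat.gcd x y) Y := by
    refine ppd fun p k hp => ?_
    have b1 := pk (c1.trans c2.symm).symm.dvd (p ^ k)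
    have b2 := pk (c1.trans c3.symm).symm.dvd (p ^ k)
    simp only [hY, pp_lcm hp, Nat.dvd_gcd_iff] at b1 b2 ⊢
    clear * - b1 b2
    tauto
  have hΛY : Nat.gcd (Nat.gcd x y) z ∣ Y := by
    rw [hY]
    exact (Nat.dvd_gcd ((Nat.gcd_dvd_left _ _).trans (Nat.gcd_dvd_left _ _))
      (Nat.gcd_dvd_right _ _)).trans (Nat.dvd_lcm_left _ _)
  have gYG : Nat.gcd (Nat.gcd x y) Y = Nat.gcd (Nat.gcd x y) z :=
    Nat.dvd_antisymm (Nat.dvd_gcd (Nat.gcd_dvd_left _ _) ((Nat.gcd_dvd_right _ _).trans hYz))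
      (Nat.dvd_gcd (Nat.gcd_dvd_left _ _) hΛY)
  have hΛσ : Nat.gcd (Nat.gcd x y) z ∣ σ := by
    rw [hσ, hT]; exact Nat.dvd_gcd hΛY (Nat.dvd_lcm_left _ _)
  have hσY : σ ∣ Y := hσ ▸ Nat.gcd_dvd_left _ _
  have gσG : Nat.gcd (Nat.gcd x y) σ = Nat.gcd (Nat.gcd x y) z :=
    Nat.dvd_antisymm (Nat.dvd_gcd (Nat.gcd_dvd_left _ _)
      ((Nat.gcd_dvd_right _ _).trans (hσY.trans hYz)))
      (Nat.dvd_gcd (Nat.gcd_dvd_left _ _) hΛσ)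
  have hσ3 : σ ∣ d₃ := by
    refine ppd fun p k hp => ?_
    have a1 := h.three (p ^ k)
    have a3 := h.s14.three (p ^ k)
    have a4 := h.s24.three (p ^ k)
    simp only [hσ, hT, hY, pp_lcm hp, Nat.dvd_gcd_iff]
    rintro ⟨⟨b1, b2⟩ | ⟨b1, b2⟩, ⟨⟨c1, c2⟩, c3⟩ | c⟩
    · exact (a1 c1 c2 c3).2.2
    · exact (a4 b1 c b2).2.2
    · exact (a1 c1 c2 c3).2.2
    · exact (a3 c b1 b2).2.2
  have hm : Nat.lcm (Nat.gcd x y) σ ∣ d₃ := Nat.lcm_dvd hxy hσ3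
  have hl : Nat.lcm Y T ∣ d₂ := Nat.lcm_dvd hY2 (hT ▸ Nat.lcm_dvd h.t123.2.1 ht)
  have hΛt : Nat.gcd (Nat.gcd (Nat.gcd x y) z) t = 1 :=
    h.four _ ((Nat.gcd_dvd_left _ _).trans ((Nat.gcd_dvd_left _ _).trans (Nat.gcd_dvd_left _ _)))
      ((Nat.gcd_dvd_left _ _).trans ((Nat.gcd_dvd_left _ _).trans (Nat.gcd_dvd_right _ _)))
      ((Nat.gcd_dvd_left _ _).trans (Nat.gcd_dvd_right _ _)) (Nat.gcd_dvd_right _ _)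
  have hGH : Nat.gcd (Nat.gcd x y) (Nat.gcd z t) = 1 := by
    rw [← Nat.gcd_assoc]; exact hΛt
  -- the numerical identities, all over `Λ = gcd (x, y, z)`
  have i1 := Nat.gcd_mul_lcm (Nat.gcd x y) z
  have i2 := Nat.gcd_mul_lcm (Nat.gcd x y) Y
  have i3 := Nat.gcd_mul_lcm (Nat.gcd x y) σ
  have i4 := Nat.gcd_mul_lcm Y T
  have i5 := Nat.gcd_mul_lcm (Nat.gcd (Nat.gcd x y) z) t
  have i6 := Nat.gcd_mul_lcm z t
  have i7 := Nat.gcd_mul_lcm (Nat.gcd x y) (Nat.gcd z t)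
  have i8 := Nat.gcd_mul_lcm Y (Nat.gcd z t)
  have hbz : Nat.lcm Y (Nat.gcd z t) ∣ z := Nat.lcm_dvd hYz (Nat.gcd_dvd_left _ _)
  -- `σ = Λ κ` with `κ = gcd (Y, t)`
  have hκ : Nat.gcd Y (Nat.gcd z t) = Nat.gcd Y t := by
    rw [← Nat.gcd_assoc, Nat.gcd_eq_left hYz]
  have hσκ : σ = Nat.gcd (Nat.gcd x y) z * Nat.gcd Y t := by
    have hc : Nat.Coprime (Nat.gcd (Nat.gcd x y) z) (Nat.gcd Y t) :=
      Nat.Coprime.coprime_dvd_right (Nat.gcd_dvd_right _ _) hΛt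
    rw [← hc.lcm_eq_mul]
    refine Nat.dvd_antisymm (ppd fun p k hp => ?_) (Nat.lcm_dvd hΛσ ?_)
    · simp only [hσ, hT, pp_lcm hp, Nat.dvd_gcd_iff]
      rintro ⟨b, c | c⟩
      · exact Or.inl c
      · exact Or.inr ⟨b, c⟩
    · rw [hσ, hT]
      exact Nat.gcd_dvd_gcd_of_dvd_right _ (Nat.dvd_lcm_right _ _)
  have wle := Nat.le_of_dvd (Nat.lcm_pos pG pY) w_le
  have mle := Nat.le_of_dvd h.p3 hm
  have lle := Nat.le_of_dvd h.p2 hl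
  have σle := Nat.le_of_dvd pY hσY
  rw [gYG] at i2
  rw [gσG] at i3
  rw [← hσ] at i4
  rw [hΛt, ← hT, one_mul] at i5
  rw [hGH, one_mul] at i7
  rw [hκ] at i8
  rw [c1] at i1 chain
  rw [← hT] at chain
  rw [i7] at bal
  obtain ⟨γ, hγ⟩ := Nat.gcd_dvd_left (Nat.gcd x y) z
  obtain ⟨β, hβ⟩ : Nat.gcd Y t ∣ Nat.gcd z t := Nat.gcd_dvd_gcd_of_dvd_left _ hYz
  obtain ⟨τ, hτ⟩ := Nat.gcd_dvd_right Y t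
  have pκ := Nat.gcd_pos_of_pos_left t pY
  have pH := Nat.gcd_pos_of_pos_left t h.pz
  obtain ⟨ζ, hζ⟩ := hbz
  generalize Nat.gcd Y t = κ at *
  generalize Nat.gcd (Nat.gcd x y) z = Λ at *
  generalize Nat.gcd x y = G at *
  generalize Nat.gcd z t = H at *
  generalize Nat.lcm x y = w at *
  generalize Nat.lcm G Y = w' at *
  generalize Nat.lcm G σ = m at *
  generalize Nat.lcm Y T = l at *
  generalize Nat.lcm z t = r at *
  generalize Nat.lcm Y H = s at *
  have j1 : d₁ = γ * z := Nat.eq_of_mul_eq_mul_left pΛ (by rw [i1, hγ]; ring)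
  have j2 : w' = γ * Y := Nat.eq_of_mul_eq_mul_left pΛ (by rw [i2, hγ]; ring)
  have j3 : m = γ * σ := Nat.eq_of_mul_eq_mul_left pΛ (by rw [i3, hγ]; ring)
  have jT : T = τ * σ := by rw [i5, hτ, hσκ]; ring
  have j4 : l = τ * Y := Nat.eq_of_mul_eq_mul_left pσ (by rw [i4, jT]; ring)
  have j8 : s = β * Y := Nat.eq_of_mul_eq_mul_left pκ (by rw [i8, hβ]; ring)
  have pβ : 0 < β := Nat.pos_of_mul_pos_left (hβ ▸ pH)
  have hζ' : z = β * Y * ζ := by rw [← j8]; exact hζ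
  have pζ : 0 < ζ := Nat.pos_of_mul_pos_left (hζ' ▸ h.pz)
  have j6 : r = ζ * τ * Y := Nat.eq_of_mul_eq_mul_left pH (by
    rw [i6, hβ]; nth_rewrite 1 [hζ', hτ]; ring)
  have j7 : G * H = γ * β * σ := by rw [hγ, hβ, hσκ]; ring
  obtain ⟨e, rfl⟩ : ∃ e, Y = σ + e := ⟨Y - σ, by omega⟩
  rcases le_total γ τ with hle | hle
  · apply chain
    obtain ⟨f, rfl⟩ : ∃ f, τ = γ + f := ⟨τ - γ, by omega⟩
    have : T + w ≤ d₂ + d₃ := by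
      have key : (γ + f) * (σ + e) + γ * σ = (γ + f) * σ + γ * (σ + e) + e * f := by ring
      rw [jT]; omega
    omega
  · apply bal
    obtain ⟨f, rfl⟩ : ∃ f, γ = τ + f := ⟨γ - τ, by omega⟩
    obtain ⟨b, rfl⟩ : ∃ b, β = b + 1 := ⟨β - 1, by omega⟩
    obtain ⟨c, rfl⟩ : ∃ c, ζ = c + 1 := ⟨ζ - 1, by omega⟩
    rw [j7, j6]
    have hz1 : d₁ = (τ + f) * ((b + 1) * (σ + e) * (c + 1)) := by rw [j1, ← hζ']
    have key : (τ + f) * (σ + e) + (c + 1) * τ * (σ + e) + (τ + f) * (b + 1) * σ ≤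
        (τ + f) * ((b + 1) * (σ + e) * (c + 1)) + τ * (σ + e) + (τ + f) * σ := by
      have : (τ + f) * ((b + 1) * (σ + e) * (c + 1)) + τ * (σ + e) + (τ + f) * σ =
        (τ + f) * (σ + e) + (c + 1) * τ * (σ + e) + (τ + f) * (b + 1) * σ +
          ((τ + f) * b * e + (σ + e) * c * (f + (τ + f) * b)) := by ring
      rw [this]; exact Nat.le_add_right _ _
    omega

/-- Weights `x, y, z ∣ d₁` and `t ∣ d₂`, with `gcd (x, y) ∣ d₃`, the gcds with `z` dividing `d₂`,
and `z ∤ d₂`. A prime power of `z` not dividing `d₂` divides neither `x` nor `y`, so the lcms it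
misses are at most `d₁ / 2`; in chain gluings two such halves fit in `d₁`. -/
lemma L310_23 (h : R4 x y z t d₁ d₂ d₃) (hx : x ∣ d₁) (hy : y ∣ d₁) (hz : z ∣ d₁) (ht : t ∣ d₂)
    (hxy : Nat.gcd x y ∣ d₃) (hxz : Nat.gcd x z ∣ d₂) (hyz : Nat.gcd y z ∣ d₂) (hz2 : ¬ z ∣ d₂) :
    Good x y z t (d₁ + d₂ + d₃) := by
  obtain ⟨p, k, hp, q1, q2⟩ := exists_pp hz2
  have qx : ¬ p ^ k ∣ x := fun hq => q2 ((Nat.dvd_gcd hq q1).trans hxz)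
  have qy : ¬ p ^ k ∣ y := fun hq => q2 ((Nat.dvd_gcd hq q1).trans hyz)
  have qd := q1.trans hz
  have half : ∀ m, m ∣ d₁ → ¬ p ^ k ∣ m → 2 * m ≤ d₁ := fun m hm hq =>
    two_mul_le_of_dvd_ne hm h.p1 (by rintro rfl; exact hq qd)
  have hw := half _ (Nat.lcm_dvd hx hy) (by rw [pp_lcm hp]; tauto)
  -- if `lcm x z` is a proper divisor of `d₁`, glue in the order `x, z, t, y`
  have key : ∀ {x y : ℕ}, R4 x y z t d₁ d₂ d₃ → x ∣ d₁ → y ∣ d₁ → Nat.gcd x z ∣ d₂ →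
      ¬ p ^ k ∣ x → ¬ p ^ k ∣ y → Nat.lcm x z ≠ d₁ → Good x y z t (d₁ + d₂ + d₃) := by
    intro x y h hx hy hxz qx qy hne
    refine (h.s23.s34.chain ?_).s34.s23
    have e1 := two_mul_le_of_dvd_ne (Nat.lcm_dvd hx hz) h.p1 hne
    have e2 := Nat.le_of_dvd h.p2 (Nat.lcm_dvd hxz ht)
    have e3 := half (Nat.lcm (Nat.gcd (Nat.gcd x z) t) y)
      (Nat.lcm_dvd (((Nat.gcd_dvd_left _ _).trans (Nat.gcd_dvd_left _ _)).trans hx) hy)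
      (by rw [pp_lcm hp, Nat.dvd_gcd_iff, Nat.dvd_gcd_iff]; tauto)
    omega
  by_cases c1 : Nat.lcm (Nat.gcd x y) z = d₁
  · by_cases c2 : Nat.lcm x z = d₁
    · by_cases c3 : Nat.lcm y z = d₁
      · exact h.L310_23_eq ht hxy hxz hyz c1 c2 c3
      · exact (key h.s12 hy hx hyz qy qx c3).s12
    · exact key h hx hy hxz qx qy c2
  · refine h.chain ?_
    have := two_mul_le_of_dvd_ne (Nat.lcm_dvd ((Nat.gcd_dvd_left _ _).trans hx) hz) h.p1 c1
    have e2 := Nat.le_of_dvd h.p2 (Nat.lcm_dvd h.t123.2.1 ht)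
    omega

/-- Weights `x, y, z ∣ d₁` and `t ∣ d₂`. -/
lemma L310 (h : R4 x y z t d₁ d₂ d₃) (hx : x ∣ d₁) (hy : y ∣ d₁) (hz : z ∣ d₁) (ht : t ∣ d₂) :
    Good x y z t (d₁ + d₂ + d₃) := by
  -- up to relabelling, the two gcds with `z` divide the same second degree
  have core : ∀ {x y z}, R4 x y z t d₁ d₂ d₃ → x ∣ d₁ → y ∣ d₁ → z ∣ d₁ →
      (Nat.gcd x z ∣ d₂ ∧ Nat.gcd y z ∣ d₂ ∨ Nat.gcd x z ∣ d₃ ∧ Nat.gcd y z ∣ d₃) →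
      Good x y z t (d₁ + d₂ + d₃) := by
    intro x y z h hx hy hz hc
    by_cases n2 : z ∣ d₂
    · exact h.L220 hx hy n2 ht
    rcases hc with hc | hc <;> rcases h.two with hG | hG | hG
    · exact h.L310_22 hx hy hz ht hG.2 hc.1 hc.2
    · exact h.L310_23 hx hy hz ht hG.2 hc.1 hc.2 n2
    · exact h.L310_22 hx hy hz ht hG.1 hc.1 hc.2
    · exact h.L310_32 hx hy hz ht hG.2 hc.1 hc.2
    · exact h.L310_33 hx hy hz ht hG.2 hc.1 hc.2
    · exact h.L310_32 hx hy hz ht hG.1 hc.1 hc.2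
  have p1 := h.two
  have p2 := h.s23.two
  have p3 := h.s12.s23.two
  by_cases q1 : Nat.gcd x z ∣ d₂ ∧ Nat.gcd y z ∣ d₂ ∨ Nat.gcd x z ∣ d₃ ∧ Nat.gcd y z ∣ d₃
  · exact core h hx hy hz q1
  by_cases q2 : Nat.gcd x y ∣ d₂ ∧ Nat.gcd z y ∣ d₂ ∨ Nat.gcd x y ∣ d₃ ∧ Nat.gcd z y ∣ d₃
  · exact (core h.s23 hx hz hy q2).s23
  · refine (core (x := y) (y := z) (z := x) h.s12.s23 hy hz hx ?_).s23.s12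
    rw [Nat.gcd_comm y x, Nat.gcd_comm z x]
    rw [Nat.gcd_comm z y] at q2
    clear * - p1 p2 p3 q1 q2
    tauto
end R4

/-! ### Four weights: all weights share a degree -/

/-- A divisor of `d` missing a prime power `p ^ k ∣ d` has cofactor divisible by `p`. -/
lemma dvd_cofactor {M c p k : ℕ} (hp : p.Prime) (h1 : p ^ k ∣ M * c) (h2 : ¬ p ^ k ∣ M) :
    p ∣ c := by
  by_contra hc
  exact h2 (((Nat.Prime.coprime_iff_not_dvd hp).2 hc).pow_left k |>.dvd_of_dvd_mul_right h1)

lemma pmul {M d p k : ℕ} (hM : M ∣ d) (hd : 0 < d) (hp : p.Prime) (h1 : p ^ k ∣ d)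
    (h2 : ¬ p ^ k ∣ M) : p * M ≤ d := by
  obtain ⟨c, rfl⟩ := hM
  have := Nat.le_of_dvd (Nat.pos_of_mul_pos_left hd) (dvd_cofactor hp h1 h2)
  nlinarith

lemma six_le_mul {p q : ℕ} (hp : p.Prime) (hq : q.Prime) (hne : p ≠ q) : 6 ≤ p * q := by
  have := hp.two_le
  have := hq.two_le
  rcases Nat.lt_or_gt_of_ne hne with h | h <;> nlinarith

/-- A divisor of `d` missing powers of two distinct primes in `d` is at most `d / 6`. -/
lemma pmul2 {M d p k q l : ℕ} (hM : M ∣ d) (hd : 0 < d) (hp : p.Prime) (h1 : p ^ k ∣ d)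
    (h2 : ¬ p ^ k ∣ M) (hq : q.Prime) (h3 : q ^ l ∣ d) (h4 : ¬ q ^ l ∣ M) (hne : p ≠ q) :
    6 * M ≤ d := by
  obtain ⟨c, rfl⟩ := hM
  have := Nat.le_of_dvd (Nat.pos_of_mul_pos_left hd)
    (((Nat.coprime_primes hp hq).2 hne).mul_dvd_of_dvd_of_dvd
      (dvd_cofactor hp h1 h2) (dvd_cofactor hq h3 h4))
  have := six_le_mul hp hq hne
  nlinarith

lemma five_sixths {p q A B d : ℕ} (hp : p.Prime) (hq : q.Prime) (hne : p ≠ q) (hA : p * A ≤ d)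
    (hB : q * B ≤ d) : 6 * A + 6 * B ≤ 5 * d := by
  have := hp.two_le
  have := hq.two_le
  rcases Nat.lt_or_gt_of_ne hne with h | h
  · have : 3 ≤ q := by omega
    nlinarith
  · have : 3 ≤ p := by omega
    nlinarith

namespace R4
variable {x y z t d₁ d₂ d₃ : ℕ}

/-- For weights `x, y, z` dividing only `d₁`, the last term of the chain gluing is at most `d₁ / 6`.
Each of the three has a prime power dividing neither `t` nor both of `d₂`, `d₃`. These involve two
distinct primes, because powers of a single prime would make the smallest of them divide `x`, `y`
and `z`, hence `d₂` and `d₃`; and both powers are missed by that last term. -/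
lemma six_mul_last (h : R4 x y z t d₁ d₂ d₃) (hx : x ∣ d₁) (hy : y ∣ d₁) (hz : z ∣ d₁)
    (ht : t ∣ d₁) (x2 : ¬ x ∣ d₂) (x3 : ¬ x ∣ d₃) (y2 : ¬ y ∣ d₂) (y3 : ¬ y ∣ d₃)
    (z2 : ¬ z ∣ d₂) (z3 : ¬ z ∣ d₃) :
    6 * Nat.lcm (Nat.gcd (Nat.gcd x y) z) t ≤ d₁ := by
  have key : ∀ {x y z}, R4 x y z t d₁ d₂ d₃ → ¬ x ∣ d₂ → ¬ x ∣ d₃ →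
      ∃ p k, p.Prime ∧ p ^ k ∣ x ∧ ¬ p ^ k ∣ t ∧ ¬ (p ^ k ∣ d₂ ∧ p ^ k ∣ d₃) := by
    intro x y z h h2 h3
    obtain ⟨p, k, hp, a1, a2⟩ := exists_pp h2
    obtain ⟨q, l, hq, b1, b2⟩ := exists_pp h3
    by_cases c1 : p ^ k ∣ t
    · refine ⟨q, l, hq, b1, fun c2 => ?_, fun hc => b2 hc.2⟩
      have g2 : ¬ Nat.gcd x t ∣ d₂ := fun hg => a2 ((Nat.dvd_gcd a1 c1).trans hg)
      have g3 : ¬ Nat.gcd x t ∣ d₃ := fun hg => b2 ((Nat.dvd_gcd b1 c2).trans hg)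
      have := h.s24.two
      tauto
    · exact ⟨p, k, hp, a1, c1, fun hc => a2 hc.1⟩
  obtain ⟨p, k, hp, p1, p2, p3⟩ := key h x2 x3
  obtain ⟨q, l, hq, q1, q2, q3⟩ := key h.s12 y2 y3
  obtain ⟨r, m, hr, r1, r2, r3⟩ := key h.s13 z2 z3
  have hdvd : Nat.lcm (Nat.gcd (Nat.gcd x y) z) t ∣ d₁ := Nat.lcm_dvd h.t123.1 ht
  have miss : ∀ {p k : ℕ}, p.Prime → ¬ p ^ k ∣ t → ¬ (p ^ k ∣ d₂ ∧ p ^ k ∣ d₃) →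
      ¬ p ^ k ∣ Nat.lcm (Nat.gcd (Nat.gcd x y) z) t := by
    intro p k hp a b hc
    rw [pp_lcm hp] at hc
    rcases hc with hc | hc
    · exact b ⟨hc.trans h.t123.2.1, hc.trans h.t123.2.2⟩
    · exact a hc
  by_cases e1 : p = q
  · by_cases e2 : p = r
    · subst e1; subst e2
      exfalso
      -- the smallest of three powers of one prime divides all three weights
      rcases le_total k l with u | u <;> rcases le_total k m with v | v <;>
        rcases le_total l m with w | w
      · exact p3 (h.three _ p1 ((pow_dvd_pow _ u).trans q1) ((pow_dvd_pow _ v).trans r1)).2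
      · exact p3 (h.three _ p1 ((pow_dvd_pow _ u).trans q1) ((pow_dvd_pow _ v).trans r1)).2
      · exact r3 (h.three _ ((pow_dvd_pow _ v).trans p1) ((pow_dvd_pow _ (v.trans u)).trans q1) r1).2
      · exact r3 (h.three _ ((pow_dvd_pow _ v).trans p1) ((pow_dvd_pow _ w).trans q1) r1).2
      · exact q3 (h.three _ ((pow_dvd_pow _ u).trans p1) q1 ((pow_dvd_pow _ w).trans r1)).2
      · exact r3 (h.three _ ((pow_dvd_pow _ (w.trans u)).trans p1) ((pow_dvd_pow _ w).trans q1) r1).2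
      · exact q3 (h.three _ ((pow_dvd_pow _ u).trans p1) q1 ((pow_dvd_pow _ w).trans r1)).2
      · exact r3 (h.three _ ((pow_dvd_pow _ v).trans p1) ((pow_dvd_pow _ w).trans q1) r1).2
    · exact pmul2 hdvd h.p1 hp (p1.trans hx) (miss hp p2 p3) hr (r1.trans hz) (miss hr r2 r3) e2
  · exact pmul2 hdvd h.p1 hp (p1.trans hx) (miss hp p2 p3) hq (q1.trans hy) (miss hq q2 q3) e1

/-- The weight `x` has a prime power dividing neither `d₂` nor `d₃`. -/
def Excl (x d₂ d₃ : ℕ) : Prop := ∃ p k : ℕ, p.Prime ∧ p ^ k ∣ x ∧ ¬ p ^ k ∣ d₂ ∧ ¬ p ^ k ∣ d₃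

/-- A divisor of `x` dividing neither `d₂` nor `d₃` does not divide another weight. -/
lemma excl_not_dvd (h : R4 x y z t d₁ d₂ d₃) {q : ℕ} (hx : q ∣ x) (h2 : ¬ q ∣ d₂)
    (h3 : ¬ q ∣ d₃) : ¬ q ∣ y := fun hy => by
  have := h.two
  have g2 : ¬ Nat.gcd x y ∣ d₂ := fun hg => h2 ((Nat.dvd_gcd hx hy).trans hg)
  have g3 : ¬ Nat.gcd x y ∣ d₃ := fun hg => h3 ((Nat.dvd_gcd hx hy).trans hg)
  tauto

lemma pow_ne {p k q l x y : ℕ} (hx : p ^ k ∣ x) (hy : q ^ l ∣ y) (hxy : ¬ p ^ k ∣ y)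
    (hyx : ¬ q ^ l ∣ x) : p ≠ q := by
  rintro rfl
  rcases le_total k l with h | h
  · exact hxy ((pow_dvd_pow _ h).trans hy)
  · exact hyx ((pow_dvd_pow _ h).trans hx)

/-- If each of the four weights has a prime power dividing neither `d₂` nor `d₃`, these belong to
four distinct primes, and each term of the chain gluing misses two of them. -/
lemma four_excl (h : R4 x y z t d₁ d₂ d₃) (hx : x ∣ d₁) (hy : y ∣ d₁) (hz : z ∣ d₁)
    (ht : t ∣ d₁) (ex : Excl x d₂ d₃) (ey : Excl y d₂ d₃) (ez : Excl z d₂ d₃)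
    (et : Excl t d₂ d₃) : Good x y z t d₁ := by
  obtain ⟨p, k, hp, p1, p2, p3⟩ := ex
  obtain ⟨q, l, hq, q1, q2, q3⟩ := ey
  obtain ⟨r, m, hr, r1, r2, r3⟩ := ez
  obtain ⟨s, n, hs, s1, s2, s3⟩ := et
  have pY := h.excl_not_dvd p1 p2 p3
  have pz := h.s23.excl_not_dvd p1 p2 p3
  have pt := h.s24.excl_not_dvd p1 p2 p3
  have qx := h.s12.excl_not_dvd q1 q2 q3
  have qz := h.s12.s23.excl_not_dvd q1 q2 q3
  have qt := h.s12.s24.excl_not_dvd q1 q2 q3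
  have rx := h.s13.s23.excl_not_dvd r1 r2 r3
  have ry := h.s13.excl_not_dvd r1 r2 r3
  have rt := h.s13.s24.excl_not_dvd r1 r2 r3
  have sx := h.s14.s24.excl_not_dvd s1 s2 s3
  have sy := h.s14.excl_not_dvd s1 s2 s3
  have sz := h.s14.s23.excl_not_dvd s1 s2 s3
  refine h.chain ?_
  have e1 := pmul2 (Nat.lcm_dvd hx hy) h.p1 hr (r1.trans hz) (by rw [pp_lcm hr]; tauto) hs
    (s1.trans ht) (by rw [pp_lcm hs]; tauto) (pow_ne r1 s1 rt sz)
  have e2 := pmul2 (Nat.lcm_dvd ((Nat.gcd_dvd_left x y).trans hx) hz) h.p1 hp (p1.trans hx)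
    (by rw [pp_lcm hp, Nat.dvd_gcd_iff]; tauto) hq
    (q1.trans hy) (by rw [pp_lcm hq, Nat.dvd_gcd_iff]; tauto) (pow_ne p1 q1 pY qx)
  have e3 := pmul2 (Nat.lcm_dvd h.t123.1 ht) h.p1 hp (p1.trans hx)
    (by rw [pp_lcm hp, Nat.dvd_gcd_iff, Nat.dvd_gcd_iff]; tauto) hq
    (q1.trans hy) (by rw [pp_lcm hq, Nat.dvd_gcd_iff, Nat.dvd_gcd_iff]; tauto) (pow_ne p1 q1 pY qx)
  omega

/-- The choice of labels in `non_excl`: the first three propositions say which of `x, y, z` are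
divisible by one prime power, the last three which are divisible by the other. -/
lemma pick {a b c a' b' c' : Prop} (h1 : ¬ (a ∧ b)) (h2 : ¬ (a ∧ c)) (h3 : ¬ (b ∧ c))
    (h4 : ¬ (a' ∧ b')) (h5 : ¬ (a' ∧ c')) (h6 : ¬ (a ∧ a')) (h7 : ¬ (b ∧ b')) (h8 : ¬ (c ∧ c')) :
    (¬ a ∧ ¬ b ∧ ¬ c') ∨ (¬ a ∧ ¬ c ∧ ¬ b') ∨ (¬ b ∧ ¬ c ∧ ¬ a') := by
  grind

/-- Four weights dividing only `d₁`, such that every prime power of `t` divides `d₂` or `d₃`. Then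
`t` has powers of two distinct primes `p, q`, one not dividing `d₂`, one not dividing `d₃`; for a
suitable order the terms of the chain gluing are at most `d₁ / p`, `d₁ / q` and `d₁ / 6`, where `1
/ p + 1 / q ≤ 5 / 6`. -/
lemma non_excl (h : R4 x y z t d₁ d₂ d₃) (hx : x ∣ d₁) (hy : y ∣ d₁) (hz : z ∣ d₁)
    (ht : t ∣ d₁) (x2 : ¬ x ∣ d₂) (x3 : ¬ x ∣ d₃) (y2 : ¬ y ∣ d₂) (y3 : ¬ y ∣ d₃)
    (z2 : ¬ z ∣ d₂) (z3 : ¬ z ∣ d₃) (t2 : ¬ t ∣ d₂) (t3 : ¬ t ∣ d₃) (et : ¬ Excl t d₂ d₃) :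
    Good x y z t d₁ := by
  obtain ⟨p, k, hp, p1, p2⟩ := exists_pp t2
  obtain ⟨q, l, hq, q1, q2⟩ := exists_pp t3
  have p3 : p ^ k ∣ d₃ := by by_contra hc; exact et ⟨p, k, hp, p1, p2, hc⟩
  have q3 : q ^ l ∣ d₂ := by by_contra hc; exact et ⟨q, l, hq, q1, hc, q2⟩
  have hpq : p ≠ q := pow_ne p3 q3 p2 q2
  -- the favourable labelling
  have key : ∀ {x y z}, R4 x y z t d₁ d₂ d₃ → x ∣ d₁ → y ∣ d₁ → z ∣ d₁ → ¬ x ∣ d₂ → ¬ x ∣ d₃ →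
      ¬ y ∣ d₂ → ¬ y ∣ d₃ → ¬ z ∣ d₂ → ¬ z ∣ d₃ → ¬ p ^ k ∣ x → ¬ p ^ k ∣ y → ¬ q ^ l ∣ z →
      Good x y z t d₁ := by
    intro x y z h hx hy hz x2 x3 y2 y3 z2 z3 a b c
    refine h.chain ?_
    have e1 := pmul (Nat.lcm_dvd hx hy) h.p1 hp (p1.trans ht) (by rw [pp_lcm hp]; tauto)
    have e2 := pmul (Nat.lcm_dvd ((Nat.gcd_dvd_left x y).trans hx) hz) h.p1 hq (q1.trans ht)
      (by
        rw [pp_lcm hq, Nat.dvd_gcd_iff]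
        rintro (⟨u, v⟩ | u)
        · exact q2 (h.s34.three _ u v q1).2.2
        · exact c u)
    have e3 := h.six_mul_last hx hy hz ht x2 x3 y2 y3 z2 z3
    have := five_sixths hp hq hpq e1 e2
    omega
  -- neither prime power divides two of `x, y, z`, and no weight but `t` is divisible by both
  have n1 : ∀ {x y z}, R4 x y z t d₁ d₂ d₃ → ¬ (p ^ k ∣ x ∧ p ^ k ∣ y) :=
    fun h hc => p2 (h.s34.three _ hc.1 hc.2 p1).2.1
  have n2 : ∀ {x y z}, R4 x y z t d₁ d₂ d₃ → ¬ (q ^ l ∣ x ∧ q ^ l ∣ y) :=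
    fun h hc => q2 (h.s34.three _ hc.1 hc.2 q1).2.2
  have n3 : ∀ {x y z}, R4 x y z t d₁ d₂ d₃ → ¬ (p ^ k ∣ x ∧ q ^ l ∣ x) := by
    intro x y z h hc
    have g2 : ¬ Nat.gcd x t ∣ d₂ := fun hg => p2 ((Nat.dvd_gcd hc.1 p1).trans hg)
    have g3 : ¬ Nat.gcd x t ∣ d₃ := fun hg => q2 ((Nat.dvd_gcd hc.2 q1).trans hg)
    have := h.s24.two
    tauto
  have a1 := n1 h
  have a2 := n1 h.s23
  have a3 := n1 h.s12.s23
  have b1 := n2 h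
  have b2 := n2 h.s23
  have c1 := n3 h
  have c2 := n3 h.s12
  have c3 := n3 h.s13
  have alt : (¬ p ^ k ∣ x ∧ ¬ p ^ k ∣ y ∧ ¬ q ^ l ∣ z) ∨ (¬ p ^ k ∣ x ∧ ¬ p ^ k ∣ z ∧ ¬ q ^ l ∣ y) ∨
      (¬ p ^ k ∣ y ∧ ¬ p ^ k ∣ z ∧ ¬ q ^ l ∣ x) := by
    exact pick a1 a2 a3 b1 b2 c1 c2 c3
  rcases alt with ⟨a, b, c⟩ | ⟨a, b, c⟩ | ⟨a, b, c⟩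
  · exact key h hx hy hz x2 x3 y2 y3 z2 z3 a b c
  · exact (key h.s23 hx hz hy x2 x3 z2 z3 y2 y3 a b c).s23
  · exact (key h.s12.s23 hy hz hx y2 y3 z2 z3 x2 x3 a b c).s23.s12

/-- Four weights each dividing `d₁` but neither `d₂` nor `d₃`: already `d₁` bounds the gluing. -/
lemma exact_four (h : R4 x y z t d₁ d₂ d₃) (hx : x ∣ d₁) (hy : y ∣ d₁) (hz : z ∣ d₁)
    (ht : t ∣ d₁) (x2 : ¬ x ∣ d₂) (x3 : ¬ x ∣ d₃) (y2 : ¬ y ∣ d₂) (y3 : ¬ y ∣ d₃)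
    (z2 : ¬ z ∣ d₂) (z3 : ¬ z ∣ d₃) (t2 : ¬ t ∣ d₂) (t3 : ¬ t ∣ d₃) : Good x y z t d₁ := by
  by_cases et : Excl t d₂ d₃
  · by_cases ez : Excl z d₂ d₃
    · by_cases ey : Excl y d₂ d₃
      · by_cases ex : Excl x d₂ d₃
        · exact h.four_excl hx hy hz ht ex ey ez et
        · exact (h.s14.non_excl ht hy hz hx t2 t3 y2 y3 z2 z3 x2 x3 ex).s34.s23.s12.s23.s34
      · exact (h.s24.non_excl hx ht hz hy x2 x3 t2 t3 z2 z3 y2 y3 ey).s34.s23.s34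
    · exact (h.s34.non_excl hx hy ht hz x2 x3 y2 y3 t2 t3 z2 z3 ez).s34
  · exact h.non_excl hx hy hz ht x2 x3 y2 y3 z2 z3 t2 t3 et

/-- All four weights divide `d₁`. -/
lemma L400 (h : R4 x y z t d₁ d₂ d₃) (hx : x ∣ d₁) (hy : y ∣ d₁) (hz : z ∣ d₁) (ht : t ∣ d₁) :
    Good x y z t (d₁ + d₂ + d₃) := by
  have key : ∀ {x y z t}, R4 x y z t d₁ d₂ d₃ → x ∣ d₁ → y ∣ d₁ → z ∣ d₁ → (t ∣ d₂ ∨ t ∣ d₃) →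
      Good x y z t (d₁ + d₂ + d₃) := by
    intro x y z t h hx hy hz ht
    rcases ht with ht | ht
    · exact h.L310 hx hy hz ht
    · rw [add_right_comm]; exact h.d23.L310 hx hy hz ht
  by_cases c1 : t ∣ d₂ ∨ t ∣ d₃
  · exact key h hx hy hz c1
  by_cases c2 : z ∣ d₂ ∨ z ∣ d₃
  · exact (key h.s34 hx hy ht c2).s34
  by_cases c3 : y ∣ d₂ ∨ y ∣ d₃
  · exact (key h.s24 hx ht hz c3).s34.s23.s34
  by_cases c4 : x ∣ d₂ ∨ x ∣ d₃
  · exact (key h.s14 ht hy hz c4).s34.s23.s12.s23.s34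
  push Not at c1 c2 c3 c4
  exact (h.exact_four hx hy hz ht c4.1 c4.2 c3.1 c3.2 c2.1 c2.2 c1.1 c1.2).mono (by omega)

/-- Two weights dividing the same degree. -/
lemma L2 (h : R4 x y z t d₁ d₂ d₃) (hx : x ∣ d₁) (hy : y ∣ d₁) : Good x y z t (d₁ + d₂ + d₃) := by
  rcases h.s13.one with hz | hz | hz <;> rcases h.s14.one with ht | ht | ht
  · exact h.L400 hx hy hz ht
  · exact h.L310 hx hy hz ht
  · rw [add_right_comm]; exact h.d23.L310 hx hy hz ht
  · exact (h.s34.L310 hx hy ht hz).s34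
  · exact h.L220 hx hy hz ht
  · exact h.L211 hx hy hz ht
  · rw [add_right_comm]; exact (h.s34.d23.L310 hx hy ht hz).s34
  · exact (h.s34.L211 hx hy ht hz).s34
  · rw [add_right_comm]; exact h.d23.L220 hx hy hz ht

/-- The case of four weights. -/
lemma all (h : R4 x y z t d₁ d₂ d₃) : Good x y z t (d₁ + d₂ + d₃) := by
  have key : ∀ {x y z t}, R4 x y z t d₁ d₂ d₃ → (x ∣ d₁ ∧ y ∣ d₁ ∨ x ∣ d₂ ∧ y ∣ d₂ ∨ x ∣ d₃ ∧ y ∣ d₃) →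
      Good x y z t (d₁ + d₂ + d₃) := by
    rintro x y z t h (hc | hc | hc)
    · exact h.L2 hc.1 hc.2
    · rw [add_comm d₁ d₂]; exact h.d12.L2 hc.1 hc.2
    · rw [show d₁ + d₂ + d₃ = d₃ + d₂ + d₁ by ring]; exact h.d13.L2 hc.1 hc.2
  have p1 := h.one
  have p2 := h.s12.one
  have p3 := h.s13.one
  have p4 := h.s14.one
  by_cases c1 : x ∣ d₁ ∧ y ∣ d₁ ∨ x ∣ d₂ ∧ y ∣ d₂ ∨ x ∣ d₃ ∧ y ∣ d₃
  · exact key h c1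
  by_cases c2 : x ∣ d₁ ∧ z ∣ d₁ ∨ x ∣ d₂ ∧ z ∣ d₂ ∨ x ∣ d₃ ∧ z ∣ d₃
  · exact (key h.s23 c2).s23
  by_cases c3 : x ∣ d₁ ∧ t ∣ d₁ ∨ x ∣ d₂ ∧ t ∣ d₂ ∨ x ∣ d₃ ∧ t ∣ d₃
  · exact (key h.s34.s23 c3).s23.s34
  by_cases c4 : y ∣ d₁ ∧ z ∣ d₁ ∨ y ∣ d₂ ∧ z ∣ d₂ ∨ y ∣ d₃ ∧ z ∣ d₃
  · exact (key h.s12.s23 c4).s23.s12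
  by_cases c5 : y ∣ d₁ ∧ t ∣ d₁ ∨ y ∣ d₂ ∧ t ∣ d₂ ∨ y ∣ d₃ ∧ t ∣ d₃
  · exact (key h.s12.s34.s23 c5).s23.s34.s12
  -- four weights, three degrees: only the pair `z, t` is left to share a degree
  refine (key h.s12.s23.s34.s12.s23 (x := z) (y := t) (z := y) (t := x) ?_).s23.s12.s34.s23.s12
  clear * - p1 p2 p3 p4 c1 c2 c3 c4 c5
  grind
end R4

/-! ### Dividing by a prime, and minimal counterexamples -/

/-- `ψ(a) = a / p` if `p ^ e ∣ a`, and `ψ(a) = a` otherwise. -/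
def psi (p e a : ℕ) : ℕ := if p ^ e ∣ a then a / p else a

/-- `g` divides `ψ(a)` exactly when `g`, or `p * g` if `p ^ e ∣ g`, divides `a`. -/
lemma dvd_psi {p e a g : ℕ} (hp : p.Prime) (he : e ≠ 0) (ha : 0 < a) :
    g ∣ psi p e a ↔ (if p ^ e ∣ g then p * g else g) ∣ a := by
  unfold psi
  by_cases h1 : p ^ e ∣ a
  · have hpa : p ∣ a := (dvd_pow_self p he).trans h1
    obtain ⟨b, rfl⟩ := hpa
    have hb : p * b / p = b := Nat.mul_div_cancel_left b hp.pos
    rw [if_pos h1, hb]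
    by_cases h2 : p ^ e ∣ g
    · rw [if_pos h2, Nat.mul_dvd_mul_iff_left hp.pos]
    · rw [if_neg h2]
      refine ⟨fun h => h.mul_left p, fun h => ?_⟩
      -- the `p`-part of `g` is at most `p ^ (e - 1)`, which divides `b`
      refine ppd fun q k hq hk => ?_
      have hk' := hk.trans h
      by_cases hqp : q = p
      · subst hqp
        have hke : k + 1 ≤ e := by
          by_contra hlt
          exact h2 ((pow_dvd_pow q (by omega)).trans hk)
        have := (pow_dvd_pow q hke).trans h1
        rwa [pow_succ, mul_comm, Nat.mul_dvd_mul_iff_left hq.pos] at this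
      · exact (((Nat.coprime_primes hq hp).2 hqp).pow_left k).dvd_of_dvd_mul_left hk'
  · rw [if_neg h1]
    by_cases h2 : p ^ e ∣ g
    · rw [if_pos h2]
      exact ⟨fun h => absurd (h2.trans h) h1, fun h => absurd ((h2.mul_left p).trans h) h1⟩
    · rw [if_neg h2]

/-- Applying `ψ` to degrees and weights preserves regularity: by `dvd_psi`, the divisibility of
all `ψ(a)` by `g` amounts to the divisibility of all `a` by one number, which must not divide `h`.
-/
lemma reg_psi {h h' p e : ℕ} {D A : Multiset ℕ} (hp : p.Prime) (he : e ≠ 0) (hD : ∀ d ∈ D, 0 < d)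
    (hA : ∀ a ∈ A, 0 < a) (hreg : Reg h D A)
    (hh : ∀ g, ¬ g ∣ h' → ¬ (if p ^ e ∣ g then p * g else g) ∣ h) :
    Reg h' (D.map (psi p e)) (A.map (psi p e)) := by
  intro g hg
  have key : ∀ S : Multiset ℕ, (∀ a ∈ S, 0 < a) → (S.map (psi p e)).countP (g ∣ ·) =
      S.countP ((if p ^ e ∣ g then p * g else g) ∣ ·) := by
    intro S hS
    rw [Multiset.countP_map, Multiset.countP_eq_card_filter]
    congr 1
    exact Multiset.filter_congr fun a ha => dvd_psi hp he (hS a ha)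
  rw [key D hD, key A hA]
  exact hreg _ (hh g hg)

/-- The semigroup of the weights `ψ(a)`, multiplied by `p`, lies in the semigroup of the `a`. -/
lemma mul_psi_mem {p e : ℕ} {A : Multiset ℕ} (he : e ≠ 0) {z : ℤ}
    (hz : z ∈ Sg (A.map (psi p e))) : (p : ℤ) * z ∈ Sg A := by
  have : Sg (A.map (psi p e)) ≤ (Sg A).comap (AddMonoidHom.mulLeft (p : ℤ)) := by
    refine Sg_le fun b hb => ?_
    obtain ⟨a, ha, rfl⟩ := Multiset.mem_map.1 hb
    change (p : ℤ) * (psi p e a : ℤ) ∈ Sg A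
    unfold psi
    split_ifs with h
    · have : (p : ℤ) * ((a / p : ℕ) : ℤ) = a := by
        exact_mod_cast Nat.mul_div_cancel' ((dvd_pow_self p he).trans h)
      rw [this]; exact mem_Sg ha
    · exact mul_mem_of (mem_Sg ha) p
  exact this hz

lemma Reg.sub {h : ℕ} {D A B : Multiset ℕ} (hr : Reg h D A) (hB : B ≤ A) : Reg h D B :=
  fun g hg => (Multiset.countP_le_of_le _ hB).trans (hr g hg)

lemma Sg_mono {A B : Multiset ℕ} (h : B ≤ A) : Sg B ≤ Sg A :=
  Sg_le fun _ ha => mem_Sg (Multiset.mem_of_le h ha)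

/-- The bound `F ≤ δ` for three degrees: everything above `δ` is in the semigroup. -/
def Concl (A : Multiset ℕ) (d₁ d₂ d₃ : ℕ) : Prop :=
  ∀ z : ℤ, (d₁ + d₂ + d₃ : ℤ) - A.sum < z → z ∈ Sg A

/-- The standing hypotheses for three degrees and `h = 1`. -/
structure St (A : Multiset ℕ) (d₁ d₂ d₃ : ℕ) : Prop where
  two_le : ∀ a ∈ A, 2 ≤ a
  p1 : 0 < d₁
  p2 : 0 < d₂
  p3 : 0 < d₃
  reg : Reg 1 {d₁, d₂, d₃} A

section perm
variable {A : Multiset ℕ} {d₁ d₂ d₃ : ℕ}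

lemma St.d12 (h : St A d₁ d₂ d₃) : St A d₂ d₁ d₃ :=
  ⟨h.two_le, h.p2, h.p1, h.p3, by
    have := h.reg; simp only [Multiset.insert_eq_cons] at this ⊢
    rwa [Multiset.cons_swap d₂ d₁]⟩

lemma St.d23 (h : St A d₁ d₂ d₃) : St A d₁ d₃ d₂ :=
  ⟨h.two_le, h.p1, h.p3, h.p2, by
    have := h.reg; simp only [Multiset.insert_eq_cons, ← Multiset.cons_zero] at this ⊢
    rwa [Multiset.cons_swap d₃ d₂]⟩

lemma Concl.d12 (h : Concl A d₁ d₂ d₃) : Concl A d₂ d₁ d₃ := fun z hz => h z (by linarith)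
lemma Concl.d23 (h : Concl A d₁ d₂ d₃) : Concl A d₁ d₃ d₂ := fun z hz => h z (by linarith)

lemma St.r4 {x y z t : ℕ} (h : St A d₁ d₂ d₃) (hs : {x, y, z, t} ≤ A) : R4 x y z t d₁ d₂ d₃ := by
  have pos : ∀ a ∈ ({x, y, z, t} : Multiset ℕ), 0 < a := fun a ha =>
    (by decide : 0 < 2).trans_le (h.two_le a (Multiset.mem_of_le hs ha))
  exact ⟨pos _ (by simp), pos _ (by simp), pos _ (by simp), pos _ (by simp), h.p1, h.p2, h.p3,
    h.reg.sub hs⟩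

end perm

/-- A counterexample to `Concl` that is minimal for the number of weights, then their sum, and has
at least five weights. -/
structure Ctx (A : Multiset ℕ) (d₁ d₂ d₃ : ℕ) : Prop where
  st : St A d₁ d₂ d₃
  five : 5 ≤ A.card
  ih : ∀ A' e₁ e₂ e₃, 4 ≤ A'.card → (A'.card < A.card ∨ A'.card = A.card ∧ A'.sum < A.sum) →
    St A' e₁ e₂ e₃ → Concl A' e₁ e₂ e₃
  neg : ¬ Concl A d₁ d₂ d₃

/-- `x` divides `d₁` only. -/
def Ex (d₁ d₂ d₃ x : ℕ) : Prop := x ∣ d₁ ∧ ¬ x ∣ d₂ ∧ ¬ x ∣ d₃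

/-- `x` divides at least two of the degrees. -/
def Vx (d₁ d₂ d₃ x : ℕ) : Prop := (x ∣ d₁ ∧ x ∣ d₂) ∨ (x ∣ d₁ ∧ x ∣ d₃) ∨ (x ∣ d₂ ∧ x ∣ d₃)

instance (d₁ d₂ d₃ : ℕ) : DecidablePred (Ex d₁ d₂ d₃) := fun _ => by unfold Ex; infer_instance

/-- Extract one element satisfying a predicate, keeping count of the others. -/
lemma pop {P : ℕ → Prop} [DecidablePred P] {A : Multiset ℕ} {n : ℕ} (h : n + 1 ≤ A.countP P) :
    ∃ a B, A = a ::ₘ B ∧ P a ∧ n ≤ B.countP P := by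
  obtain ⟨a, ha, hP⟩ := Multiset.countP_pos.1 (Nat.succ_pos n |>.trans_le h)
  obtain ⟨B, rfl⟩ := Multiset.exists_cons_of_mem ha
  refine ⟨a, B, rfl, hP, ?_⟩
  rw [Multiset.countP_cons, if_pos hP] at h
  omega

lemma pair_of_mem {A : Multiset ℕ} {x y : ℕ} (hx : x ∈ A) (hy : y ∈ A) (hne : x ≠ y) :
    ∃ B, A = x ::ₘ y ::ₘ B := by
  obtain ⟨B, rfl⟩ := Multiset.exists_cons_of_mem hx
  obtain ⟨C, rfl⟩ := Multiset.exists_cons_of_mem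
    ((Multiset.mem_cons.1 hy).resolve_left (Ne.symm hne))
  exact ⟨C, rfl⟩

lemma card_le_countP₂ {P Q : ℕ → Prop} [DecidablePred P] [DecidablePred Q] {A : Multiset ℕ}
    (h : ∀ a ∈ A, P a ∨ Q a) : A.card ≤ A.countP P + A.countP Q := by
  induction A using Multiset.induction_on with
  | empty => simp
  | cons a s ih =>
    have := ih fun b hb => h b (Multiset.mem_cons_of_mem hb)
    rw [Multiset.card_cons, Multiset.countP_cons, Multiset.countP_cons]
    rcases h a (Multiset.mem_cons_self a s) with h | h <;> rw [if_pos h] <;> omega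

lemma card_le_countP₃ {P Q R : ℕ → Prop} [DecidablePred P] [DecidablePred Q] [DecidablePred R]
    {A : Multiset ℕ} (h : ∀ a ∈ A, P a ∨ Q a ∨ R a) :
    A.card ≤ A.countP P + A.countP Q + A.countP R := by
  induction A using Multiset.induction_on with
  | empty => simp
  | cons a s ih =>
    have := ih fun b hb => h b (Multiset.mem_cons_of_mem hb)
    rw [Multiset.card_cons, Multiset.countP_cons, Multiset.countP_cons, Multiset.countP_cons]
    rcases h a (Multiset.mem_cons_self a s) with h | h | h <;> rw [if_pos h] <;> omega

/-- Replacing two weights dividing `d₁` by their lcm preserves regularity, as soon as every other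
weight meets both of them inside a common second degree. -/
lemma St.merge {B : Multiset ℕ} {x y d₁ d₂ d₃ : ℕ} (h : St (x ::ₘ y ::ₘ B) d₁ d₂ d₃)
    (hx : x ∣ d₁) (hy : y ∣ d₁)
    (hB : ∀ z ∈ B, z ∣ d₂ ∨ z ∣ d₃ ∨ (Nat.gcd x z ∣ d₂ ∧ Nat.gcd y z ∣ d₂) ∨
      (Nat.gcd x z ∣ d₃ ∧ Nat.gcd y z ∣ d₃)) : St (Nat.lcm x y ::ₘ B) d₁ d₂ d₃ := by
  have hx2 := h.two_le x (by simp)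
  have hy2 := h.two_le y (by simp)
  refine ⟨?_, h.p1, h.p2, h.p3, ?_⟩
  · intro a ha
    rcases Multiset.mem_cons.1 ha with rfl | ha
    · exact hx2.trans (Nat.le_of_dvd (Nat.lcm_pos (by omega) (by omega)) (Nat.dvd_lcm_left x y))
    · exact h.two_le a (by simp [ha])
  intro g hg
  rw [Multiset.countP_cons]
  split_ifs with hgw
  swap
  · exact (h.reg.sub ((Multiset.le_cons_self _ _).trans (Multiset.le_cons_self _ _))) g hg
  have hw1 : g ∣ d₁ := hgw.trans (Nat.lcm_dvd hx hy)
  -- `g` divides the lcm of its gcds with `x` and `y`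
  have glue : ∀ {m : ℕ}, Nat.gcd g x ∣ m → Nat.gcd g y ∣ m → g ∣ m := by
    intro m h1 h2
    refine ppd fun p k hp hk => ?_
    rcases (pp_lcm hp).1 (hk.trans hgw) with h3 | h3
    · exact (Nat.dvd_gcd hk h3).trans h1
    · exact (Nat.dvd_gcd hk h3).trans h2
  have hD : Multiset.countP (g ∣ ·) ({d₁, d₂, d₃} : Multiset ℕ) =
      (if g ∣ d₃ then 1 else 0) + (if g ∣ d₂ then 1 else 0) + 1 := by
    simp [Multiset.insert_eq_cons, Multiset.countP_cons, ← Multiset.cons_zero, hw1]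
  rw [hD]
  by_cases c1 : 1 ≤ B.countP (g ∣ ·)
  swap
  · omega
  obtain ⟨z, C, rfl, hz, -⟩ := pop (n := 0) c1
  have g2 : g ∣ d₂ ∨ g ∣ d₃ := by
    rcases hB z (by simp) with h1 | h1 | h1 | h1
    · exact Or.inl (hz.trans h1)
    · exact Or.inr (hz.trans h1)
    · exact Or.inl (glue ((Nat.dvd_gcd (Nat.gcd_dvd_right _ _)
        ((Nat.gcd_dvd_left _ _).trans hz)).trans h1.1) ((Nat.dvd_gcd (Nat.gcd_dvd_right _ _)
        ((Nat.gcd_dvd_left _ _).trans hz)).trans h1.2))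
    · exact Or.inr (glue ((Nat.dvd_gcd (Nat.gcd_dvd_right _ _)
        ((Nat.gcd_dvd_left _ _).trans hz)).trans h1.1) ((Nat.dvd_gcd (Nat.gcd_dvd_right _ _)
        ((Nat.gcd_dvd_left _ _).trans hz)).trans h1.2))
  rw [Multiset.countP_cons, if_pos hz]
  by_cases c2 : 1 ≤ C.countP (g ∣ ·)
  swap
  · rcases g2 with g2 | g2 <;> rw [if_pos g2] <;> omega
  obtain ⟨z', E, rfl, hz', -⟩ := pop (n := 0) c2
  have hregx : Reg 1 {d₁, d₂, d₃} (x ::ₘ z ::ₘ z' ::ₘ E) := h.reg.sub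
    (Multiset.cons_le_cons _ (Multiset.le_cons_self _ _))
  have hregy : Reg 1 {d₁, d₂, d₃} (y ::ₘ z ::ₘ z' ::ₘ E) := h.reg.sub (Multiset.le_cons_self _ _)
  have tx := reg_three (g := Nat.gcd g x) hregx (Nat.gcd_dvd_right _ _)
    ((Nat.gcd_dvd_left _ _).trans hz) ((Nat.gcd_dvd_left _ _).trans hz')
  have ty := reg_three (g := Nat.gcd g y) hregy (Nat.gcd_dvd_right _ _)
    ((Nat.gcd_dvd_left _ _).trans hz) ((Nat.gcd_dvd_left _ _).trans hz')
  rw [Multiset.countP_cons, if_pos hz', if_pos (glue tx.2.1 ty.2.1), if_pos (glue tx.2.2 ty.2.2)]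
  by_cases c3 : 1 ≤ E.countP (g ∣ ·)
  swap
  · omega
  obtain ⟨z'', F, rfl, hz'', -⟩ := pop (n := 0) c3
  exfalso
  have fx := reg_four (g := Nat.gcd g x) hregx (Nat.gcd_dvd_right _ _)
    ((Nat.gcd_dvd_left _ _).trans hz) ((Nat.gcd_dvd_left _ _).trans hz')
    ((Nat.gcd_dvd_left _ _).trans hz'')
  have fy := reg_four (g := Nat.gcd g y) hregy (Nat.gcd_dvd_right _ _)
    ((Nat.gcd_dvd_left _ _).trans hz) ((Nat.gcd_dvd_left _ _).trans hz')
    ((Nat.gcd_dvd_left _ _).trans hz'')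
  exact hg (glue (by rw [fx]) (by rw [fy]))

namespace Ctx
variable {A B : Multiset ℕ} {x y z d₁ d₂ d₃ : ℕ}

lemma d12 (h : Ctx A d₁ d₂ d₃) : Ctx A d₂ d₁ d₃ :=
  ⟨h.st.d12, h.five, h.ih, fun hc => h.neg hc.d12⟩
lemma d23 (h : Ctx A d₁ d₂ d₃) : Ctx A d₁ d₃ d₂ :=
  ⟨h.st.d23, h.five, h.ih, fun hc => h.neg hc.d23⟩

lemma one (h : Ctx A d₁ d₂ d₃) (hx : x ∈ A) : x ∣ d₁ ∨ x ∣ d₂ ∨ x ∣ d₃ := by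
  obtain ⟨B, rfl⟩ := Multiset.exists_cons_of_mem hx
  exact reg_one h.st.reg

/-- In a minimal counterexample, `St.merge` never applies to incomparable `x, y`: the lcm has at
least the sum `x + y`, so the smaller pair has a smaller amplitude, and a smaller semigroup. -/
lemma merge (h : Ctx (x ::ₘ y ::ₘ B) d₁ d₂ d₃) (hxy : ¬ x ∣ y) (hyx : ¬ y ∣ x) (hx : x ∣ d₁)
    (hy : y ∣ d₁) (hB : ∀ z ∈ B, z ∣ d₂ ∨ z ∣ d₃ ∨ (Nat.gcd x z ∣ d₂ ∧ Nat.gcd y z ∣ d₂) ∨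
      (Nat.gcd x z ∣ d₃ ∧ Nat.gcd y z ∣ d₃)) : False := by
  have hx2 := h.st.two_le x (by simp)
  have hy2 := h.st.two_le y (by simp)
  have h5 := h.five
  have hc := h.ih (Nat.lcm x y ::ₘ B) d₁ d₂ d₃ (by simp at h5 ⊢; omega) (Or.inl (by simp))
    (h.st.merge hx hy hB)
  refine h.neg fun w hw => ?_
  have hle : (x + y : ℤ) ≤ (Nat.lcm x y : ℕ) := by
    exact_mod_cast add_le_lcm (by omega) (by omega) hxy hyx
  have := hc w (by
    rw [Multiset.sum_cons] at hw ⊢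
    rw [Multiset.sum_cons] at hw
    push_cast at hw ⊢
    linarith)
  refine Sg_le (fun a ha => ?_) this
  rcases Multiset.mem_cons.1 ha with rfl | ha
  · obtain ⟨k, hk⟩ := Nat.dvd_lcm_left x y
    rw [hk, mul_comm]
    push_cast
    exact mul_mem_of (mem_Sg (by simp)) k
  · exact mem_Sg (by simp [ha])

/-- Dividing out a prime `p` from two weights whose gcd misses `d₂` gives a smaller regular pair;
minimality bounds `d₂` below by the sum of the other weights, up to one weight prime to `p`. -/
lemma reduce (h : Ctx (x ::ₘ y ::ₘ B) d₁ d₂ d₃) (hxy : ¬ x ∣ y) (hyx : ¬ y ∣ x)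
    (hg : ¬ Nat.gcd x y ∣ d₂) :
    ∃ p : ℕ, p.Prime ∧ p ∣ x ∧ p ∣ y ∧ ∀ i ∈ B, ¬ p ∣ i → B.sum < d₂ + i := by
  obtain ⟨p, e, hp, q1, q2⟩ := exists_pp hg
  have he : e ≠ 0 := by rintro rfl; simp at q2
  have hx2 := h.st.two_le x (by simp)
  have hy2 := h.st.two_le y (by simp)
  have qx := q1.trans (Nat.gcd_dvd_left _ _)
  have qy := q1.trans (Nat.gcd_dvd_right _ _)
  have px := (dvd_pow_self p he).trans qx
  have py := (dvd_pow_self p he).trans qy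
  have h13 : Nat.gcd x y ∣ d₁ ∧ Nat.gcd x y ∣ d₃ := by
    rcases reg_two h.st.reg with h1 | h1 | h1
    · exact absurd h1.2 hg
    · exact h1
    · exact absurd h1.1 hg
  refine ⟨p, hp, px, py, fun i hi hpi => ?_⟩
  by_contra hlt
  push Not at hlt
  have hBq : ∀ b ∈ B, ¬ p ^ e ∣ b := by
    intro b hb hq
    obtain ⟨C, rfl⟩ := Multiset.exists_cons_of_mem hb
    exact q2 (reg_three h.st.reg qx qy hq).2.1
  have hmap : (x ::ₘ y ::ₘ B).map (psi p e) = (x / p) ::ₘ (y / p) ::ₘ B := by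
    rw [Multiset.map_cons, Multiset.map_cons]
    congr 1
    · exact if_pos qx
    congr 1
    · exact if_pos qy
    · conv_rhs => rw [← Multiset.map_id B]
      exact Multiset.map_congr rfl fun b hb => if_neg (hBq b hb)
  have hmapD : ({d₁, d₂, d₃} : Multiset ℕ).map (psi p e) = {d₁ / p, d₂, d₃ / p} := by
    simp only [Multiset.insert_eq_cons, Multiset.map_cons, Multiset.map_singleton]
    rw [show psi p e d₁ = d₁ / p from if_pos (q1.trans h13.1),
      show psi p e d₂ = d₂ from if_neg q2, show psi p e d₃ = d₃ / p from if_pos (q1.trans h13.2)]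
  have pd1 := (dvd_pow_self p he).trans (q1.trans h13.1)
  have pd3 := (dvd_pow_self p he).trans (q1.trans h13.2)
  have p1 := h.st.p1
  have p2 := h.st.p2
  have p3 := h.st.p3
  have hreg' : Reg 1 {d₁ / p, d₂, d₃ / p} ((x / p) ::ₘ (y / p) ::ₘ B) := by
    rw [← hmap, ← hmapD]
    refine reg_psi hp he ?_ (fun a ha => by have := h.st.two_le a ha; omega) h.st.reg ?_
    · intro d hd
      simp only [Multiset.insert_eq_cons, Multiset.mem_cons, Multiset.mem_singleton] at hd
      rcases hd with rfl | rfl | rfl <;> assumption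
    · intro g hg1 hg2
      apply hg1
      split_ifs at hg2
      · exact (Dvd.intro_left _ rfl).trans hg2
      · exact hg2
  obtain ⟨x', rfl⟩ := px
  obtain ⟨y', rfl⟩ := py
  obtain ⟨e₁, rfl⟩ := pd1
  obtain ⟨e₃, rfl⟩ := pd3
  simp only [Nat.mul_div_cancel_left _ hp.pos] at hreg' hmap
  have hx' : 2 ≤ x' := by
    rcases x' with _ | _ | n
    · omega
    · exact absurd (by simp) hxy
    · omega
  have hy' : 2 ≤ y' := by
    rcases y' with _ | _ | n
    · omega
    · exact absurd (by simp) hyx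
    · omega
  have h5 := h.five
  have hpp := hp.two_le
  have hc := h.ih (x' ::ₘ y' ::ₘ B) e₁ d₂ e₃ (by simp at h5 ⊢; omega)
    (Or.inr ⟨by simp, by simp only [Multiset.sum_cons]; nlinarith⟩)
    ⟨by
      intro a ha
      rcases Multiset.mem_cons.1 ha with rfl | ha
      · exact hx'
      rcases Multiset.mem_cons.1 ha with rfl | ha
      · exact hy'
      exact h.st.two_le a (by simp [ha]), Nat.pos_of_mul_pos_left p1, p2,
      Nat.pos_of_mul_pos_left p3, hreg'⟩
  refine h.neg fun w hw => ?_
  -- choose `0 ≤ k < p` with `p ∣ w - k * i`; then `w - k * i` is `p` times an element that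
  -- minimality places in the semigroup of the smaller pair
  have hcop : IsCoprime (i : ℤ) (p : ℤ) :=
    Nat.isCoprime_iff_coprime.2 ((Nat.Prime.coprime_iff_not_dvd hp).2 hpi).symm
  obtain ⟨u, v, huv⟩ := hcop
  have hp0 : (0 : ℤ) < p := by exact_mod_cast hp.pos
  have k0 := Int.emod_nonneg (w * u) hp0.ne'
  have k1 := Int.emod_lt_of_pos (w * u) hp0
  have kd := Int.emod_add_mul_ediv (w * u) p
  generalize w * u % (p : ℤ) = k at *
  obtain ⟨m, hm⟩ : (p : ℤ) ∣ w - k * i := by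
    refine ⟨w * v + i * (w * u / p), ?_⟩
    have : w = w * (u * i + v * p) := by rw [huv, mul_one]
    calc w - k * i = w * (u * i + v * p) - k * i := by rw [← this]
      _ = p * (w * v + i * (w * u / p)) := by linear_combination (i : ℤ) * (-kd)
  have hm' : m ∈ Sg (x' ::ₘ y' ::ₘ B) := by
    refine hc m ?_
    have hlt' : (d₂ : ℤ) + i ≤ B.sum := by exact_mod_cast hlt
    simp only [Multiset.sum_cons] at hw ⊢
    push_cast at hw ⊢
    have hi0 : (0 : ℤ) ≤ i := by positivity
    refine lt_of_mul_lt_mul_left (a := (p : ℤ)) ?_ hp0.le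
    rw [← hm]
    have h1 : k * i ≤ (p - 1) * i := mul_le_mul_of_nonneg_right (by linarith) hi0
    have h2 : 0 ≤ ((p : ℤ) - 1) * (B.sum - i - d₂) := mul_nonneg (by linarith) (by linarith)
    nlinarith
  rw [← hmap] at hm'
  have := mul_psi_mem he hm'
  rw [← hm] at this
  lift k to ℕ using k0
  have hk : (k : ℤ) * i ∈ Sg ((p * x') ::ₘ (p * y') ::ₘ B) := mul_mem_of (mem_Sg (by simp [hi])) k
  have := add_mem this hk
  simpa using this

end Ctx

/-! ### Weights with a single degree -/

namespace Ctx
variable {A B : Multiset ℕ} {x y z t d₁ d₂ d₃ : ℕ}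

/-- A weight dividing `d₁` only divides no other weight. -/
lemma incomp (h : Ctx (x ::ₘ y ::ₘ B) d₁ d₂ d₃) (hx : Ex d₁ d₂ d₃ x) : ¬ x ∣ y := by
  intro hxy
  have h2 := reg_two h.st.reg
  rw [Nat.gcd_eq_left hxy] at h2
  exact h2.elim (fun e => hx.2.1 e.2) fun e => e.elim (fun e => hx.2.2 e.2) fun e => hx.2.1 e.1

lemma incomp' (h : Ctx (x ::ₘ y ::ₘ B) d₁ d₂ d₃) (hy : Ex d₁ d₂ d₃ y) : ¬ y ∣ x := by
  rw [Multiset.cons_swap] at h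
  exact h.incomp hy

lemma not_ex (h : Ctx A d₁ d₂ d₃) (hz : z ∈ A) (he : ¬ Ex d₁ d₂ d₃ z) : z ∣ d₂ ∨ z ∣ d₃ := by
  have := h.one hz
  unfold Ex at he
  tauto

/-- Four weights divide `d₁` only and `gcd (x, y) ∤ d₂`: by `reduce` the remaining weights sum up
to at most `d₂`, so the bound `d₁` of `exact_four` is enough. -/
lemma four_red (h : Ctx (x ::ₘ y ::ₘ z ::ₘ t ::ₘ B) d₁ d₂ d₃) (hx : Ex d₁ d₂ d₃ x)
    (hy : Ex d₁ d₂ d₃ y) (hz : Ex d₁ d₂ d₃ z) (ht : Ex d₁ d₂ d₃ t) (hg : ¬ Nat.gcd x y ∣ d₂) :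
    False := by
  obtain ⟨p, hp, px, py, hi⟩ := h.reduce (h.incomp hx) (h.incomp' hy) hg
  have hB : B.sum ≤ d₂ := by
    by_cases pz : p ∣ z
    · by_cases pt : p ∣ t
      · exact absurd (reg_four h.st.reg px py pz pt) hp.ne_one
      · have := hi t (by simp) pt
        simp only [Multiset.sum_cons] at this
        omega
    · have := hi z (by simp) pz
      simp only [Multiset.sum_cons] at this
      omega
  have hle : ({x, y, z, t} : Multiset ℕ) ≤ x ::ₘ y ::ₘ z ::ₘ t ::ₘ B := by
    have : x ::ₘ y ::ₘ z ::ₘ t ::ₘ B = {x, y, z, t} + B := by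
      simp [Multiset.insert_eq_cons]
    rw [this]; exact Multiset.le_add_right _ _
  have hG := (h.st.r4 hle).exact_four hx.1 hy.1 hz.1 ht.1 hx.2.1 hx.2.2 hy.2.1 hy.2.2 hz.2.1 hz.2.2
    ht.2.1 ht.2.2
  refine h.neg fun w hw => Sg_mono hle (hG w ?_)
  simp only [Multiset.sum_cons] at hw
  push_cast at hw
  have : (B.sum : ℤ) ≤ d₂ := by exact_mod_cast hB
  push_cast at this
  linarith [Int.natCast_nonneg d₃]

/-- With at most three weights dividing `d₁` only, two of them can be merged if their gcds with
the third divide a common second degree. -/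
lemma tri (h : Ctx (x ::ₘ y ::ₘ z ::ₘ B) d₁ d₂ d₃) (hx : Ex d₁ d₂ d₃ x)
    (hy : Ex d₁ d₂ d₃ y) (hB : B.countP (Ex d₁ d₂ d₃) = 0)
    (hg : (Nat.gcd x z ∣ d₂ ∧ Nat.gcd y z ∣ d₂) ∨ (Nat.gcd x z ∣ d₃ ∧ Nat.gcd y z ∣ d₃)) :
    False := by
  refine h.merge (h.incomp hx) (h.incomp' hy) hx.1 hy.1 fun w hw => ?_
  rcases Multiset.mem_cons.1 hw with rfl | hw
  · exact Or.inr (Or.inr hg)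
  · have := h.not_ex (z := w) (by simp [hw]) (Multiset.countP_eq_zero.1 hB w hw)
    tauto

/-- At most one weight divides `d₁` only. -/
lemma count_ex (h : Ctx A d₁ d₂ d₃) : A.countP (Ex d₁ d₂ d₃) ≤ 1 := by
  by_contra hc
  obtain ⟨a, A₁, rfl, ha, h1⟩ := pop (n := 1) (P := Ex d₁ d₂ d₃) (A := A) (by omega)
  obtain ⟨b, B, rfl, hb, -⟩ := pop (n := 0) h1
  by_cases hB : ∀ z ∈ B, z ∣ d₂ ∨ z ∣ d₃ ∨ (Nat.gcd a z ∣ d₂ ∧ Nat.gcd b z ∣ d₂) ∨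
      (Nat.gcd a z ∣ d₃ ∧ Nat.gcd b z ∣ d₃)
  · exact h.merge (h.incomp ha) (h.incomp' hb) ha.1 hb.1 hB
  push Not at hB
  obtain ⟨z, hzB, n2, n3, hz2, hz3⟩ := hB
  obtain ⟨C, rfl⟩ := Multiset.exists_cons_of_mem hzB
  have hz : Ex d₁ d₂ d₃ z := by
    by_contra he
    rcases h.not_ex (z := z) (by simp) he with e | e
    · exact n2 e
    · exact n3 e
  by_cases hC : 1 ≤ C.countP (Ex d₁ d₂ d₃)
  · obtain ⟨t, E, rfl, ht, -⟩ := pop (n := 0) hC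
    by_cases ga : Nat.gcd a z ∣ d₂
    · have h' : Ctx (b ::ₘ z ::ₘ a ::ₘ t ::ₘ E) d₁ d₂ d₃ := by
        rwa [Multiset.cons_swap a b, Multiset.cons_swap a z] at h
      exact h'.four_red hb hz ha ht (hz2 ga)
    · have h' : Ctx (a ::ₘ z ::ₘ b ::ₘ t ::ₘ E) d₁ d₂ d₃ := by
        rwa [Multiset.cons_swap b z] at h
      exact h'.four_red ha hz hb ht ga
  · have hC0 : C.countP (Ex d₁ d₂ d₃) = 0 := by omega
    have h₂ : Ctx (a ::ₘ z ::ₘ b ::ₘ C) d₁ d₂ d₃ := by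
      rwa [Multiset.cons_swap b z] at h
    have h₃ : Ctx (b ::ₘ z ::ₘ a ::ₘ C) d₁ d₂ d₃ := by
      rwa [Multiset.cons_swap a b, Multiset.cons_swap a z] at h
    have t1 := h.tri ha hb hC0
    have t2 := h₂.tri ha hz hC0
    have t3 := h₃.tri hb hz hC0
    have r1 := reg_two h.st.reg
    have r2 := reg_two h₂.st.reg
    have r3 := reg_two h₃.st.reg
    rw [Nat.gcd_comm z b] at t2
    rw [Nat.gcd_comm z a, Nat.gcd_comm b a] at t3
    -- two of the three pairwise gcds divide the same one of `d₂`, `d₃`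
    clear * - t1 t2 t3 r1 r2 r3
    grind

/-- Two weights dividing `d₁` are comparable if no other weight divides `d₁` only. -/
lemma cmp (h : Ctx (x ::ₘ y ::ₘ B) d₁ d₂ d₃) (hx : x ∣ d₁) (hy : y ∣ d₁)
    (hB : B.countP (Ex d₁ d₂ d₃) = 0) : x ∣ y ∨ y ∣ x := by
  by_contra hc
  push Not at hc
  refine h.merge hc.1 hc.2 hx hy fun w hw => ?_
  have := h.not_ex (z := w) (by simp [hw]) (Multiset.countP_eq_zero.1 hB w hw)
  tauto

/-- Two weights dividing both `d₁` and `d₂` are comparable. -/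
lemma cmp12 (h : Ctx (x ::ₘ y ::ₘ B) d₁ d₂ d₃) (hx : x ∣ d₁) (hy : y ∣ d₁) (hx2 : x ∣ d₂)
    (hy2 : y ∣ d₂) : x ∣ y ∨ y ∣ x := by
  by_contra hc
  push Not at hc
  exact h.merge hc.1 hc.2 hx hy fun w hw =>
    Or.inr (Or.inr (Or.inl ⟨(Nat.gcd_dvd_left _ _).trans hx2, (Nat.gcd_dvd_left _ _).trans hy2⟩))

/-- `cmp12` for two members of `A`, possibly equal. -/
lemma cmp12' (h : Ctx A d₁ d₂ d₃) (hxA : x ∈ A) (hyA : y ∈ A) (hx : x ∣ d₁) (hy : y ∣ d₁)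
    (hx2 : x ∣ d₂) (hy2 : y ∣ d₂) : x ∣ y ∨ y ∣ x := by
  by_cases hxy : x = y
  · exact Or.inl hxy.dvd
  obtain ⟨B, rfl⟩ := pair_of_mem hxA hyA hxy
  exact h.cmp12 hx hy hx2 hy2

/-- A weight dividing `d₁` and another degree divides the weight dividing only `d₁`. -/
lemma dvd_ex (h : Ctx A d₁ d₂ d₃) (hxA : x ∈ A) (hyA : y ∈ A) (hx : x ∣ d₁)
    (hx2 : x ∣ d₂ ∨ x ∣ d₃) (hy : Ex d₁ d₂ d₃ y) : x ∣ y := by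
  have hxy : x ≠ y := by
    rintro rfl
    exact hx2.elim hy.2.1 hy.2.2
  obtain ⟨B, rfl⟩ := pair_of_mem hxA hyA hxy
  have hc := h.count_ex
  rw [Multiset.countP_cons, Multiset.countP_cons, if_pos hy] at hc
  exact (h.cmp hx hy.1 (by omega)).resolve_right (h.incomp' hy)

/-- A weight dividing exactly `d₁` and `d₂` prevents private divisors of `d₁` and of `d₂` from
coexisting. -/
lemma not_both (h : Ctx A d₁ d₂ d₃) (hxA : x ∈ A) (hx1 : x ∣ d₁) (hx2 : x ∣ d₂) (hx3 : ¬ x ∣ d₃) :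
    (∀ y ∈ A, ¬ Ex d₁ d₂ d₃ y) ∨ ∀ y ∈ A, ¬ Ex d₂ d₁ d₃ y := by
  by_contra hc
  push Not at hc
  obtain ⟨⟨y, hyA, hy⟩, z, hzA, hz⟩ := hc
  have e1 := h.dvd_ex hxA hyA hx1 (Or.inl hx2) hy
  have e2 := h.d12.dvd_ex hxA hzA hx2 (Or.inl hx1) hz
  have hyz : y ≠ z := by rintro rfl; exact hy.2.1 hz.1
  obtain ⟨B, rfl⟩ := pair_of_mem hyA hzA hyz
  have hxB : x ∈ B := by
    rcases Multiset.mem_cons.1 hxA with rfl | hxA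
    · exact absurd hx2 hy.2.1
    rcases Multiset.mem_cons.1 hxA with rfl | hxA
    · exact absurd hx1 hz.2.1
    exact hxA
  obtain ⟨C, rfl⟩ := Multiset.exists_cons_of_mem hxB
  exact hx3 (reg_three h.st.reg e1 e2 dvd_rfl).2.2

end Ctx

/-! ### Weights with several degrees -/

lemma exists_least {P : ℕ → Prop} (h : ∃ n, P n) : ∃ n, P n ∧ ∀ m, P m → n ≤ m := by
  classical
  exact ⟨Nat.find h, Nat.find_spec h, fun m hm => Nat.find_min' h hm⟩

lemma countP_three (P : ℕ → Prop) [DecidablePred P] (d₁ d₂ d₃ : ℕ) :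
    ({d₁, d₂, d₃} : Multiset ℕ).countP P =
      (if P d₃ then 1 else 0) + (if P d₂ then 1 else 0) + (if P d₁ then 1 else 0) := by
  simp only [Multiset.insert_eq_cons, Multiset.countP_cons, ← Multiset.cons_zero,
    Multiset.countP_zero]
  omega

namespace Ctx
variable {A B : Multiset ℕ} {v x y z t d₁ d₂ d₃ : ℕ}

/-- At most as many weights as degrees are divisible by the weight `v`. -/
lemma count_le (h : Ctx A d₁ d₂ d₃) (hv : v ∈ A) :
    A.countP (v ∣ ·) ≤ (if v ∣ d₃ then 1 else 0) + (if v ∣ d₂ then 1 else 0) +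
      (if v ∣ d₁ then 1 else 0) := by
  rw [← countP_three (v ∣ ·)]
  refine h.st.reg v fun h1 => ?_
  have := h.st.two_le v hv
  have := Nat.dvd_one.1 h1
  omega

lemma dvd_of_cmp (h : Ctx A d₁ d₂ d₃) (hv : v ∈ A) (hle : v ≤ y)
    (hc : v ∣ y ∨ y ∣ v) : v ∣ y := by
  rcases hc with hc | hc
  · exact hc
  · have := h.st.two_le v hv
    exact (le_antisymm hle (Nat.le_of_dvd (by omega) hc)).dvd

/-- `cmp` for two members of `A`, possibly equal. -/
lemma cmp' (h : Ctx A d₁ d₂ d₃) (hxA : x ∈ A) (hyA : y ∈ A) (hx : x ∣ d₁) (hy : y ∣ d₁)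
    (hE : ∀ z ∈ A, ¬ Ex d₁ d₂ d₃ z) : x ∣ y ∨ y ∣ x := by
  by_cases hxy : x = y
  · exact Or.inl hxy.dvd
  obtain ⟨B, rfl⟩ := pair_of_mem hxA hyA hxy
  exact h.cmp hx hy (Multiset.countP_eq_zero.2 fun z hz => hE z (by simp [hz]))

/-- A smallest weight with at least two degrees does not divide all three: it would divide every
weight, and there are at least five of them. -/
lemma no_triple (h : Ctx A d₁ d₂ d₃) (hv : v ∈ A) (h1 : v ∣ d₁) (h2 : v ∣ d₂) (h3 : v ∣ d₃)
    (hmin : ∀ y ∈ A, Vx d₁ d₂ d₃ y → v ≤ y) : False := by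
  have hall : ∀ y ∈ A, v ∣ y := by
    intro y hy
    by_cases hV : Vx d₁ d₂ d₃ y
    · refine h.dvd_of_cmp hv (hmin y hy hV) ?_
      rcases hV with ⟨e1, e2⟩ | ⟨e1, e2⟩ | ⟨e1, e2⟩
      · exact h.cmp12' hv hy h1 e1 h2 e2
      · exact h.d23.cmp12' hv hy h1 e1 h3 e2
      · exact h.d12.d23.cmp12' hv hy h2 e1 h3 e2
    · unfold Vx at hV
      rcases h.one hy with e | e | e
      · exact h.dvd_ex hv hy h1 (Or.inl h2) ⟨e, by tauto, by tauto⟩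
      · exact h.d12.dvd_ex hv hy h2 (Or.inl h1) ⟨e, by tauto, by tauto⟩
      · exact h.d23.d12.dvd_ex hv hy h3 (Or.inl h1) ⟨e, by tauto, by tauto⟩
  have hc := h.count_le hv
  rw [Multiset.countP_eq_card.2 hall] at hc
  have := h.five
  split_ifs at hc
  omega

/-- A smallest weight with at least two degrees cannot have exactly the degrees `d₁`, `d₂` when no
weight divides `d₁` only. -/
lemma no_double (h : Ctx A d₁ d₂ d₃) (hv : v ∈ A) (h1 : v ∣ d₁) (h2 : v ∣ d₂) (h3 : ¬ v ∣ d₃)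
    (hmin : ∀ y ∈ A, Vx d₁ d₂ d₃ y → v ≤ y) (hE : ∀ y ∈ A, ¬ Ex d₁ d₂ d₃ y) : False := by
  have h5 := h.five
  have hcv := h.count_le hv
  rw [if_neg h3, if_pos h2, if_pos h1] at hcv
  have key : ∀ y ∈ A, v ∣ y ∨ Ex d₃ d₁ d₂ y ∨ (y ∣ d₂ ∧ y ∣ d₃ ∧ ¬ y ∣ d₁) := by
    intro y hy
    by_cases e1 : y ∣ d₁
    · by_cases e2 : y ∣ d₂ ∨ y ∣ d₃
      · left
        refine h.dvd_of_cmp hv (hmin y hy ?_) (h.cmp' hv hy h1 e1 hE)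
        unfold Vx
        tauto
      · exact absurd ⟨e1, by tauto, by tauto⟩ (hE y hy)
    · by_cases e2 : y ∣ d₂
      · by_cases e3 : y ∣ d₃
        · exact Or.inr (Or.inr ⟨e2, e3, e1⟩)
        · exact Or.inl (h.d12.dvd_ex hv hy h2 (Or.inl h1) ⟨e2, e1, e3⟩)
      · exact Or.inr (Or.inl ⟨((h.one hy).resolve_left e1).resolve_left e2, e1, e2⟩)
  by_cases hy : ∃ y, y ∈ A ∧ ¬ v ∣ y ∧ y ∣ d₂ ∧ y ∣ d₃ ∧ ¬ y ∣ d₁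
  -- a smallest weight `y` with degrees `d₂, d₃` only and not divisible by `v`: then every weight is
  -- divisible by `v` or by `y`, which accounts for at most four weights
  · obtain ⟨y, ⟨hyA, hvy, hy2, hy3, hy1⟩, hymin⟩ := exists_least hy
    rcases h.d12.d23.not_both hyA hy2 hy3 hy1 with hn | hn
    · exact hvy (h.dvd_of_cmp hv (hmin y hyA (Or.inr (Or.inr ⟨hy2, hy3⟩)))
        (h.d12.d23.cmp' hv hyA h2 hy2 hn))
    · have hcy := h.count_le hyA
      rw [if_pos hy3, if_pos hy2, if_neg hy1] at hcy
      have := card_le_countP₂ (P := (v ∣ ·)) (Q := (y ∣ ·)) (A := A) fun w hw => by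
        by_cases hvw : v ∣ w
        · exact Or.inl hvw
        right
        rcases key w hw with e | e | e
        · exact absurd e hvw
        · exact absurd ⟨e.1, e.2.2, e.2.1⟩ (hn w hw)
        · exact h.dvd_of_cmp hyA (hymin w ⟨hw, hvw, e⟩)
            (h.d12.d23.cmp12' hyA hw hy2 e.1 hy3 e.2.1)
      omega
  · have h3c := h.d23.d12.count_ex
    have := card_le_countP₂ (P := (v ∣ ·)) (Q := Ex d₃ d₁ d₂) (A := A) fun w hw => by
      by_cases hvw : v ∣ w
      · exact Or.inl hvw
      right
      rcases key w hw with e | e | e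
      · exact absurd e hvw
      · exact e
      · exact absurd ⟨w, hw, hvw, e⟩ hy
    omega

/-- There is no minimal counterexample: a smallest weight with at least two degrees exists, since
at most three weights have a single degree, and it contradicts `no_triple` or `no_double`. -/
lemma false (h : Ctx A d₁ d₂ d₃) : False := by
  have h5 := h.five
  have hV : ∃ v, v ∈ A ∧ Vx d₁ d₂ d₃ v := by
    by_contra hc
    push Not at hc
    have c1 := h.count_ex
    have c2 := h.d12.count_ex
    have c3 := h.d23.d12.count_ex
    have := card_le_countP₃ (P := Ex d₁ d₂ d₃) (Q := Ex d₂ d₁ d₃) (R := Ex d₃ d₁ d₂) (A := A)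
      fun w hw => by
        have e1 := h.one hw
        have e2 := hc w hw
        unfold Ex
        unfold Vx at e2
        tauto
    omega
  obtain ⟨v, ⟨hv, hV⟩, hm⟩ := exists_least hV
  have hmin : ∀ y ∈ A, Vx d₁ d₂ d₃ y → v ≤ y := fun y hy hVy => hm y ⟨hy, hVy⟩
  -- the case of exactly two degrees, up to a permutation of the degrees
  have two : ∀ {e₁ e₂ e₃ : ℕ}, Ctx A e₁ e₂ e₃ → (∀ y, Vx e₁ e₂ e₃ y → Vx d₁ d₂ d₃ y) →
      v ∣ e₁ → v ∣ e₂ → ¬ v ∣ e₃ → False := by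
    intro e₁ e₂ e₃ h' hs h1 h2 h3
    have hs' : ∀ y, Vx e₂ e₁ e₃ y → Vx d₁ d₂ d₃ y := fun y hy => hs y (by unfold Vx at *; tauto)
    rcases h'.not_both hv h1 h2 h3 with hn | hn
    · exact h'.no_double hv h1 h2 h3 (fun y hy hVy => hmin y hy (hs y hVy)) hn
    · exact h'.d12.no_double hv h2 h1 h3 (fun y hy hVy => hmin y hy (hs' y hVy)) hn
  by_cases h1 : v ∣ d₁
  · by_cases h2 : v ∣ d₂
    · by_cases h3 : v ∣ d₃
      · exact h.no_triple hv h1 h2 h3 hmin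
      · exact two h (fun y hy => hy) h1 h2 h3
    · have h3 : v ∣ d₃ := by unfold Vx at hV; tauto
      exact two h.d23 (fun y hy => by unfold Vx at *; tauto) h1 h3 h2
  · have h23 : v ∣ d₂ ∧ v ∣ d₃ := by unfold Vx at hV; tauto
    exact two h.d12.d23 (fun y hy => by unfold Vx at *; tauto) h23.1 h23.2 h1

end Ctx

/-- Three degrees, `h = 1`, at least four weights, all of them at least two. -/
lemma concl_of_st : ∀ (n s : ℕ) (A : Multiset ℕ) (d₁ d₂ d₃ : ℕ), A.card = n → A.sum = s →
    4 ≤ A.card → St A d₁ d₂ d₃ → Concl A d₁ d₂ d₃ := by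
  intro n
  induction n using Nat.strong_induction_on with
  | _ n ihn =>
  intro s
  induction s using Nat.strong_induction_on with
  | _ s ihs =>
  intro A d₁ d₂ d₃ hn hs h4 hst
  rcases h4.eq_or_lt with h4 | h5
  · obtain ⟨x, A, rfl⟩ := Multiset.card_pos_iff_exists_mem.1 (by omega : 0 < A.card) |>.imp
      fun x hx => Multiset.exists_cons_of_mem hx
    obtain ⟨y, z, t, rfl⟩ := Multiset.card_eq_three.1 (by simpa using h4.symm : A.card = 3)
    have hA : x ::ₘ ({y, z, t} : Multiset ℕ) = {x, y, z, t} := rfl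
    rw [hA] at hst ⊢
    intro w hw
    refine (hst.r4 le_rfl).all w ?_
    simp only [Multiset.insert_eq_cons, Multiset.sum_cons, Multiset.sum_singleton] at hw
    push_cast at hw ⊢
    linarith
  · by_contra hneg
    refine (Ctx.mk hst h5 ?_ hneg).false
    rintro A' e₁ e₂ e₃ h4' (hlt | ⟨he, hlt⟩) hst'
    · exact ihn _ (hn ▸ hlt) _ A' e₁ e₂ e₃ rfl rfl h4' hst'
    · exact ihs _ (hs ▸ hlt) A' e₁ e₂ e₃ (he.trans hn) rfl h4' hst'

/-! ### Arbitrary `h` -/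

/-- A new generator larger than `z` does not help to represent `z`. -/
lemma Sg_unpad {A : Multiset ℕ} {N : ℕ} {z : ℤ} (hz : z ∈ Sg (N ::ₘ A)) (hN : z < N) :
    z ∈ Sg A := by
  suffices h : 0 ≤ z ∧ (z < N → z ∈ Sg A) from h.2 hN
  clear hN
  induction hz using AddSubmonoid.closure_induction with
  | mem w hw =>
    obtain ⟨a, ha, rfl⟩ := hw
    refine ⟨Int.natCast_nonneg a, fun hlt => ?_⟩
    rcases Multiset.mem_cons.1 ha with rfl | ha
    · exact absurd hlt (lt_irrefl _)
    · exact mem_Sg ha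
  | zero => exact ⟨le_rfl, fun _ => zero_mem _⟩
  | add u v _ _ hu hv =>
    exact ⟨add_nonneg hu.1 hv.1, fun hlt => add_mem (hu.2 (by linarith)) (hv.2 (by linarith))⟩

/-- The case `h = 1`: with `k` degrees missing, pad both tuples by a common large number. -/
lemma bound_one : ∀ (k : ℕ) (D A : Multiset ℕ), D.card + k = 3 → D.card < A.card → Reg 1 D A →
    (∀ d ∈ D, 0 < d) → (∀ a ∈ A, 2 ≤ a) → ∀ z : ℤ, (D.sum : ℤ) - A.sum < z → z ∈ Sg A := by
  intro k
  induction k with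
  | zero =>
    intro D A hD hA hreg hd ha z hz
    obtain ⟨d₁, d₂, d₃, rfl⟩ := Multiset.card_eq_three.1 (by simpa using hD : D.card = 3)
    refine concl_of_st _ _ A d₁ d₂ d₃ rfl rfl
      (by simp at hA; omega)
      ⟨ha, hd _ (by simp), hd _ (by simp), hd _ (by simp), hreg⟩ z ?_
    simp only [Multiset.insert_eq_cons, Multiset.sum_cons, Multiset.sum_singleton] at hz
    rw [Nat.cast_add, Nat.cast_add] at hz
    linarith
  | succ k ih =>
    intro D A hD hA hreg hd ha z hz
    obtain ⟨N, hN⟩ : ∃ N : ℕ, z < N ∧ 2 ≤ N :=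
      ⟨z.toNat + 2, by have := Int.self_le_toNat z; push_cast; linarith, by omega⟩
    refine Sg_unpad (ih (N ::ₘ D) (N ::ₘ A) (by simp; omega) (by simpa using hA) ?_ ?_ ?_ z ?_) hN.1
    · intro g hg
      rw [Multiset.countP_cons, Multiset.countP_cons]
      exact Nat.add_le_add_right (hreg g hg) _
    · intro d hdm
      rcases Multiset.mem_cons.1 hdm with rfl | hdm
      · omega
      · exact hd d hdm
    · intro d hdm
      rcases Multiset.mem_cons.1 hdm with rfl | hdm
      · exact hN.2
      · exact ha d hdm
    · rw [Multiset.sum_cons, Multiset.sum_cons, Nat.cast_add, Nat.cast_add]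
      linarith

/-- Hence `p` times the amplitude after applying `ψ` is at most the amplitude before, if the
weights prime to `p` have at least the sum of the degrees prime to `p`. -/
lemma psi_sum {p : ℕ} (S : Multiset ℕ) : (p : ℤ) * ((S.map (psi p 1)).sum : ℕ) =
    S.sum + ((p : ℤ) - 1) * ((S.filter (¬ p ∣ ·)).sum : ℕ) := by
  induction S using Multiset.induction_on with
  | empty => simp
  | cons a S ih =>
    rw [Multiset.map_cons, Multiset.sum_cons, Multiset.sum_cons]
    unfold psi at *
    rw [pow_one] at *
    by_cases h : p ∣ a
    · rw [if_pos h, Multiset.filter_cons_of_neg (p := (¬ p ∣ ·)) _ (not_not.2 h)]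
      have : (p : ℤ) * ((a / p : ℕ) : ℤ) = a := by exact_mod_cast Nat.mul_div_cancel' h
      push_cast at ih this ⊢
      linear_combination ih + this
    · rw [if_neg h, Multiset.filter_cons_of_pos (p := (¬ p ∣ ·)) _ h, Multiset.sum_cons]
      push_cast at ih ⊢
      linear_combination ih

lemma dvd_of_psi_dvd {p h a : ℕ} (hp : p.Prime) : psi p 1 a ∣ h → a ∣ p * h := by
  unfold psi
  split_ifs with hpa
  · intro hc
    rw [pow_one] at hpa
    obtain ⟨b, rfl⟩ := hpa
    rw [Nat.mul_div_cancel_left _ hp.pos] at hc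
    exact Nat.mul_dvd_mul_left p hc
  · exact fun hc => hc.mul_left p

lemma sum_split (p : ℕ) (S : Multiset ℕ) :
    S.sum = (S.filter (p ∣ ·)).sum + (S.filter (¬ p ∣ ·)).sum := by
  rw [← Multiset.sum_add, Multiset.filter_add_not]

lemma Reg.filter {h p : ℕ} {D A : Multiset ℕ} (hr : Reg h D A) :
    Reg h (D.filter (p ∣ ·)) (A.filter (p ∣ ·)) := by
  intro g hg
  rw [Multiset.countP_filter, Multiset.countP_filter]
  simp only [← Nat.lcm_dvd_iff]
  exact hr _ fun hc => hg ((Nat.dvd_lcm_left g p).trans hc)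

lemma Reg.exists_dvd {h a : ℕ} {D A : Multiset ℕ} (hr : Reg h D A) (ha : a ∈ A) (hah : ¬ a ∣ h) :
    ∃ d ∈ D, a ∣ d :=
  Multiset.countP_pos.1 ((Multiset.countP_pos.2 ⟨a, ha, dvd_rfl⟩).trans_le (hr a hah))

/-- The exceptional configuration: two weights `x, y` sharing with a single degree `d` a
divisor `g`, all other weights being compensated by the other degrees. -/
lemma glue_case {h g x y d : ℕ} {D B : Multiset ℕ} (hreg : Reg h (d ::ₘ D) (x ::ₘ y ::ₘ B))
    (hx0 : 0 < x) (hy0 : 0 < y) (hd0 : 0 < d) (hx : ¬ x ∣ h) (hy : ¬ y ∣ h) (hgx : g ∣ x)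
    (hgy : g ∣ y) (hD : D.countP (g ∣ ·) = 0) (hs : B.sum ≤ D.sum) {z : ℤ} (hz : (h : ℤ) ∣ z)
    (hlt : ((d ::ₘ D).sum : ℤ) - (x ::ₘ y ::ₘ B).sum < z) : z ∈ Sg (x ::ₘ y ::ₘ B) := by
  have key : ∀ a, a ∈ x ::ₘ y ::ₘ B → ¬ a ∣ h → g ∣ a → a ∣ d := by
    intro a ha hah hga
    obtain ⟨e, he, hae⟩ := hreg.exists_dvd ha hah
    rcases Multiset.mem_cons.1 he with rfl | he
    · exact hae
    · exact absurd (hga.trans hae) (Multiset.countP_eq_zero.1 hD e he)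
  have hxy : Nat.gcd x y ∣ h := by
    by_contra hc
    have h1 := hreg _ hc
    have h2 : D.countP (Nat.gcd x y ∣ ·) = 0 := Multiset.countP_eq_zero.2 fun e he hge =>
      Multiset.countP_eq_zero.1 hD e he ((Nat.dvd_gcd hgx hgy).trans hge)
    rw [Multiset.countP_cons, Multiset.countP_cons, Multiset.countP_cons, h2,
      if_pos (Nat.gcd_dvd_left x y), if_pos (Nat.gcd_dvd_right x y)] at h1
    split_ifs at h1 <;> omega
  have hl : Nat.lcm x y ≤ d := Nat.le_of_dvd hd0
    (Nat.lcm_dvd (key x (by simp) hx hgx) (key y (by simp) hy hgy))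
  refine covers_glue (covers_base (mem_Sg (by simp)) hx0) (covers_base (mem_Sg (by simp)) hy0)
    hx0 hy0 z ((Int.natCast_dvd_natCast.2 hxy).trans hz) ?_
  simp only [Multiset.sum_cons] at hlt
  push_cast at hlt
  have h1 : ((Nat.lcm x y : ℕ) : ℤ) ≤ d := by exact_mod_cast hl
  have h2 : (B.sum : ℤ) ≤ D.sum := by exact_mod_cast hs
  push_cast at h2
  linarith

/-- The bound for arbitrary `h`, at most three degrees, and more weights than degrees. -/
lemma bound : ∀ (h c : ℕ) (D A : Multiset ℕ), 0 < h → D.card = c → c ≤ 3 → c < A.card →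
    Reg h D A → (∀ d ∈ D, 0 < d) → (∀ a ∈ A, 0 < a) → (∀ a ∈ A, ¬ a ∣ h) →
    ∀ z : ℤ, (h : ℤ) ∣ z → (D.sum : ℤ) - A.sum < z → z ∈ Sg A := by
  intro h
  induction h using Nat.strong_induction_on with
  | _ h ihh =>
  intro c
  induction c using Nat.strong_induction_on with
  | _ c ihc =>
  intro D A h0 hc c3 hA hreg hd ha hah z hz hlt
  by_cases h1 : h = 1
  · subst h1
    refine bound_one (3 - c) D A (by omega) (by omega) hreg hd (fun a haA => ?_) z hlt
    have := ha a haA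
    have : a ≠ 1 := fun e => hah a haA (by rw [e])
    omega
  obtain ⟨p, hp, h', rfl⟩ := Nat.exists_prime_and_dvd h1
  have h0' : 0 < h' := Nat.pos_of_mul_pos_left h0
  have hlt' : h' < p * h' := by nlinarith [hp.two_le]
  have hp0 : (0 : ℤ) < p := by exact_mod_cast hp.pos
  have hcop : ∀ g, ¬ p ∣ g → g ∣ p * h' → g ∣ h' := fun g hpg hg =>
    ((Nat.Prime.coprime_iff_not_dvd hp).2 hpg).symm.dvd_of_dvd_mul_left hg
  -- the weights not divisible by `p` outweigh the degrees not divisible by `p`: apply `ψ`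
  by_cases hS : (D.filter (¬ p ∣ ·)).sum ≤ (A.filter (¬ p ∣ ·)).sum
  · have hpos : ∀ a, 0 < a → 0 < psi p 1 a := by
      intro a ha
      unfold psi
      split_ifs with hpa
      · exact Nat.div_pos (Nat.le_of_dvd ha (by simpa using hpa)) hp.pos
      · exact ha
    obtain ⟨k, rfl⟩ := hz
    have := ihh h' hlt' c (D.map (psi p 1)) (A.map (psi p 1)) h0' (by simpa using hc) c3
      (by simpa using hA) (reg_psi hp one_ne_zero hd ha hreg fun g hg hg' => by
        rw [pow_one] at hg'
        split_ifs at hg' with hpg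
        · exact hg ((Nat.mul_dvd_mul_iff_left hp.pos).1 hg')
        · exact hg (hcop g hpg hg'))
      (by
        intro d hdm
        obtain ⟨e, he, rfl⟩ := Multiset.mem_map.1 hdm
        exact hpos e (hd e he))
      (by
        intro d hdm
        obtain ⟨e, he, rfl⟩ := Multiset.mem_map.1 hdm
        exact hpos e (ha e he))
      (by
        intro d hdm
        obtain ⟨e, he, rfl⟩ := Multiset.mem_map.1 hdm
        exact fun hc => hah e he (dvd_of_psi_dvd hp hc)) (h' * k) (dvd_mul_right _ _) (by
          refine lt_of_mul_lt_mul_left (a := (p : ℤ)) ?_ hp0.le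
          rw [mul_sub, psi_sum, psi_sum]
          have h2 : (1 : ℤ) ≤ p := by exact_mod_cast hp.one_le
          have h3 : ((D.filter (¬ p ∣ ·)).sum : ℤ) ≤ (A.filter (¬ p ∣ ·)).sum := by
            exact_mod_cast hS
          have h4 := mul_le_mul_of_nonneg_left h3 (by linarith : (0 : ℤ) ≤ p - 1)
          push_cast at hlt ⊢
          push_cast at h4
          linarith)
    have := mul_psi_mem one_ne_zero this
    push_cast
    rwa [mul_assoc]
  push Not at hS
  have sD := sum_split p D
  have sA := sum_split p A
  have cD : (D.filter (p ∣ ·)).card < c := by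
    have h2 : 0 < (D.filter (¬ p ∣ ·)).card := by
      rw [Multiset.card_pos]
      intro h3
      rw [h3] at hS
      simp at hS
    have h3 := congrArg Multiset.card (Multiset.filter_add_not (p ∣ ·) D)
    rw [Multiset.card_add] at h3
    omega
  -- otherwise passing to the multiples of `p` decreases the amplitude and the number of degrees
  by_cases hcard : (D.filter (p ∣ ·)).card < (A.filter (p ∣ ·)).card
  · refine Sg_mono (Multiset.filter_le _ A) (ihc _ cD (D.filter (p ∣ ·)) (A.filter (p ∣ ·)) h0 rfl
      (by omega) hcard hreg.filter (fun d hdm => hd d (Multiset.mem_of_mem_filter hdm))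
      (fun d hdm => ha d (Multiset.mem_of_mem_filter hdm))
      (fun d hdm => hah d (Multiset.mem_of_mem_filter hdm)) z hz ?_)
    rw [sD, sA] at hlt
    have h3 : ((A.filter (¬ p ∣ ·)).sum : ℤ) < (D.filter (¬ p ∣ ·)).sum := by exact_mod_cast hS
    push_cast at hlt h3 ⊢
    linarith
  push Not at hcard
  -- now at least as many degrees as weights are divisible by `p`; the pair is regular for `h / p`,
  -- unless a divisor `g` of `h` divides two weights and a single degree
  by_cases hr : Reg h' D A
  · exact ihh h' hlt' c D A h0' hc c3 hA hr hd ha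
      (fun a haA hc => hah a haA (hc.mul_left p)) z
      ((by push_cast; exact dvd_mul_left _ _ : (h' : ℤ) ∣ (p * h' : ℕ)).trans hz) hlt
  unfold Reg at hr
  push Not at hr
  obtain ⟨g, hg, hgc⟩ := hr
  have hgh : g ∣ p * h' := by
    by_contra hc
    have := hreg g hc
    omega
  have hpg : p ∣ g := by
    by_contra hc
    exact hg (hcop g hc hgh)
  have hgp : ∀ S : Multiset ℕ, S.countP (g ∣ ·) ≤ S.countP (p ∣ ·) := fun S => by
    rw [Multiset.countP_eq_card_filter, Multiset.countP_eq_card_filter]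
    exact Multiset.card_le_card (Multiset.monotone_filter_right S fun a hga => hpg.trans hga)
  rw [← Multiset.countP_eq_card_filter] at hcard cD
  rw [← Multiset.countP_eq_card_filter] at hcard
  have hA1 := hgp A
  obtain ⟨x, A₁, rfl, hgx, -⟩ := pop (n := 0) (P := (g ∣ ·)) (A := A) (by omega)
  obtain ⟨d, hdD, hxd⟩ := hreg.exists_dvd (a := x) (by simp) (hah x (by simp))
  obtain ⟨D', rfl⟩ := Multiset.exists_cons_of_mem hdD
  have hgd := hgx.trans hxd
  have hpx := hpg.trans hgx
  have hpd := hpg.trans hgd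
  rw [Multiset.countP_cons, Multiset.countP_cons, if_pos hgx, if_pos hgd] at hgc
  rw [Multiset.countP_cons, Multiset.countP_cons, if_pos hpx, if_pos hpd] at hcard
  rw [Multiset.countP_cons, if_pos hpd] at cD
  obtain ⟨y, B, rfl, hgy, -⟩ := pop (n := 0) (P := (g ∣ ·)) (A := A₁) (by omega)
  have hpy := hpg.trans hgy
  have hgB := hgp B
  rw [Multiset.countP_cons, if_pos hgy] at hgc
  rw [Multiset.countP_cons, if_pos hpy] at hcard
  have hB0 : B.countP (p ∣ ·) = 0 := by omega
  refine glue_case hreg (ha x (by simp)) (ha y (by simp)) (hd d (by simp)) (hah x (by simp))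
    (hah y (by simp)) hgx hgy (by omega) ?_ hz hlt
  rw [Multiset.filter_cons_of_neg (p := (¬ p ∣ ·)) _ (not_not.2 hpd),
    Multiset.filter_cons_of_neg (p := (¬ p ∣ ·)) _ (not_not.2 hpx),
    Multiset.filter_cons_of_neg (p := (¬ p ∣ ·)) _ (not_not.2 hpy),
    Multiset.filter_eq_self.2 (Multiset.countP_eq_zero.1 hB0)] at hS
  have := sum_split p D'
  omega

/-! ### From tuples to multisets -/

lemma mem_Sg_map {κ : Type*} [Fintype κ] {a : κ → ℕ} {z : ℤ}
    (hz : z ∈ Sg ((univ : Finset κ).val.map a)) :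
    ∃ x : κ → ℕ, ((∑ i, x i * a i : ℕ) : ℤ) = z := by
  classical
  induction hz using AddSubmonoid.closure_induction with
  | mem w hw =>
    obtain ⟨b, hb, rfl⟩ := hw
    obtain ⟨i, -, rfl⟩ := Multiset.mem_map.1 hb
    exact ⟨Pi.single i 1, by simp [Pi.single_apply]⟩
  | zero => exact ⟨0, by simp⟩
  | add u v _ _ hu hv =>
    obtain ⟨x, rfl⟩ := hu
    obtain ⟨y, rfl⟩ := hv
    exact ⟨x + y, by simp [add_mul, sum_add_distrib]⟩

/-- Regularity only needs to be tested on the full set of weights divisible by a given `g`. -/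
lemma reg_of_pair {ι κ : Type*} [Fintype ι] [Fintype κ] {h : ℕ} {d : ι → ℕ} {a : κ → ℕ}
    (ha : ∀ i, 0 < a i) (hreg : IsHRegularPair h d a) :
    Reg h ((univ : Finset ι).val.map d) ((univ : Finset κ).val.map a) := by
  classical
  intro g hg
  rw [Multiset.countP_map, Multiset.countP_map]
  change #{i | g ∣ a i} ≤ #{j | g ∣ d j}
  rcases (univ.filter (g ∣ a ·)).eq_empty_or_nonempty with h0 | h0
  · rw [h0]; simp
  have hgG : g ∣ (univ.filter (g ∣ a ·)).gcd a := Finset.dvd_gcd fun i hi => by simpa using hi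
  have hG : ¬ (univ.filter (g ∣ a ·)).gcd a ∣ h := fun hc => hg (hgG.trans hc)
  have hG0 : (univ.filter (g ∣ a ·)).gcd a ≠ 0 := by
    intro hc
    obtain ⟨i, hi⟩ := h0
    exact (ha i).ne' (Finset.gcd_eq_zero_iff.1 hc i hi)
  have hG1 : (univ.filter (g ∣ a ·)).gcd a ≠ 1 := fun hc => hG (by rw [hc]; exact one_dvd h)
  obtain ⟨P, -, hP, hPd⟩ := (hreg _ (subset_univ _) h0 (by omega)).resolve_right hG
  rw [← hP]
  exact card_le_card fun j hj => by simpa using hgG.trans (hPd j hj)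

/-- **Theorem (codimension 3).**
If `(d;a) = (d₁,d₂,d₃; a₀,…,aₙ)` is an `h`-regular pair with exactly three degrees,
`n ≥ 3`, and `aᵢ ∤ h` for all `i`, then `δ(d;a) ≥ F^h(a₀,…,aₙ)`. -/
theorem codim_three_frobenius_bound (h n : ℕ) (hh : 0 < h) (hn : 3 ≤ n)
    (d : Fin 3 → ℕ) (a : Fin (n + 1) → ℕ)
    (hd : ∀ j, 0 < d j) (ha : ∀ i, 0 < a i)
    (hreg : IsHRegularPair h d a) (hnd : ∀ i, ¬ a i ∣ h) :
    deltaPair d a ≥ frobNum h a := by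
  have hb := bound h 3 (univ.val.map d) (univ.val.map a) hh (by simp) le_rfl (by simp; omega)
    (reg_of_pair ha hreg) (Multiset.forall_mem_map_iff.2 fun j _ => hd j)
    (Multiset.forall_mem_map_iff.2 fun i _ => ha i) (Multiset.forall_mem_map_iff.2 fun i _ => hnd i)
  unfold frobNum frobOn
  -- `-lcm` is not representable, so the supremum is not taken over an empty set
  refine csSup_le ⟨-((Nat.lcm (univ.gcd a) h : ℕ) : ℤ), (dvd_refl _).neg_right, ?_⟩ ?_
  · rintro ⟨x, hx⟩
    have hg : 0 < univ.gcd a := Nat.pos_of_ne_zero fun hc =>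
      (ha 0).ne' (Finset.gcd_eq_zero_iff.1 hc 0 (mem_univ _))
    have := Nat.lcm_pos hg hh
    omega
  · rintro z ⟨hz, hx⟩
    by_contra hlt
    push Not at hlt
    refine hx (mem_Sg_map (hb z ((Int.natCast_dvd_natCast.2 (Nat.dvd_lcm_right _ _)).trans hz) ?_))
    unfold deltaPair deltaOn at hlt
    rw [← Nat.cast_sum, ← Nat.cast_sum] at hlt
    exact hlt
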